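/- arXiv:1801.05121 — 3 statements merged into one kernel-verified Lean document; each statement's English description precedes it below -/
import Mathlib

section
/- Fix κ > β. The piecewise-defined function f solves the fluid PDE for h(x) = max(x_2 − κ/√n, 0); that is, (−x_1 + x_2 − β/√n)·f_1(x) − x_2·f_2(x) = −max(x_2 − κ/√n, 0) for all x ∈ Ω, and f_1(0, x_2) = f_2(0, x_2) for all x_2 ≥ 0. -/
/-- `(ν, η)` solves the nonlinear system of Lemma `gamma` for initial value `x₁`. -/
def GammaSol (n : ℕ) (β κ x1 ν η : ℝ) : Prop :=
  κ / Real.sqrt n ≤ ν ∧ 0 ≤ η ∧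
    -(β / Real.sqrt n) + (x1 + β / Real.sqrt n) * Real.exp (-η) +
        η * ν * Real.exp (-η) = 0 ∧
    ν * Real.exp (-η) = κ / Real.sqrt n

/-- `η` solves the hitting-time equation `β/√n - (x₁ + β/√n)e^{-η} - η x₂ e^{-η} = 0`. -/
def HitEq (n : ℕ) (β x1 x2 η : ℝ) : Prop :=
  β / Real.sqrt n - (x1 + β / Real.sqrt n) * Real.exp (-η) -
      η * x2 * Real.exp (-η) = 0

/-- The piecewise candidate solution of Lemma `derivs`:
`f(x) = 0` for `x₂ ∈ [0, κ/√n]`;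
`f(x) = x₂ - κ/√n - (κ/√n)log(√n x₂/κ)` for `x ≤ Γ^{(κ)}`, `x₂ ≥ κ/√n`;
`f(x) = x₂(1 - e^{-τ(x)}) - (κ/√n)τ(x) + (1/2)(√n/β)(x₂ e^{-τ(x)} - κ/√n)²` for
`x ≥ Γ^{(κ)}`.  (On the overlaps of the regions the pieces agree, so the `if-then-else`
priority below is immaterial.) -/
noncomputable def fCand (n : ℕ) (β κ : ℝ) (νs : ℝ → ℝ) (tau : ℝ → ℝ → ℝ)
    (x1 x2 : ℝ) : ℝ :=
  if νs x1 ≤ x2 then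
    x2 * (1 - Real.exp (-tau x1 x2)) - κ / Real.sqrt n * tau x1 x2 +
      1 / 2 * (Real.sqrt n / β) * (x2 * Real.exp (-tau x1 x2) - κ / Real.sqrt n) ^ 2
  else if κ / Real.sqrt n ≤ x2 then
    x2 - κ / Real.sqrt n - κ / Real.sqrt n * Real.log (Real.sqrt n * x2 / κ)
  else 0

open Real Set Filter Topology in
lemma q_anti (b k : ℝ) (hb : 0 < b) (hk : b < k) :
    StrictAntiOn (fun s : ℝ => (b - k * s) * Real.exp s) (Set.Ici 0) := by
  apply strictAntiOn_of_deriv_neg (convex_Ici 0)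
  · fun_prop
  · intro x hx
    rw [interior_Ici] at hx
    have hx : 0 < x := hx
    have h : HasDerivAt (fun s : ℝ => (b - k * s) * Real.exp s)
        ((-(k * 1)) * Real.exp x + (b - k * x) * Real.exp x) x :=
      (((hasDerivAt_id x).const_mul k).const_sub b).mul (Real.hasDerivAt_exp x)
    rw [h.deriv]
    have := Real.exp_pos x
    have h2 : -(k * 1) + (b - k * x) < 0 := by nlinarith
    nlinarith

lemma phi_anti (b y : ℝ) (hb : 0 < b) (s t : ℝ) (hst : s < t) (ht : b * Real.exp t < y) :
    b * (Real.exp t - 1) - y * t < b * (Real.exp s - 1) - y * s := by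
  have h1 : s - t + 1 ≤ Real.exp (s - t) := Real.add_one_le_exp _
  have h2 : Real.exp s = Real.exp (s - t) * Real.exp t := by
    rw [← Real.exp_add]; congr 1; ring
  have h3 := Real.exp_pos t
  have h4 : (s - t + 1) * Real.exp t ≤ Real.exp s := by
    rw [h2]; exact mul_le_mul_of_nonneg_right h1 h3.le
  nlinarith [mul_le_mul_of_nonneg_left h4 hb.le, mul_pos (sub_pos.2 hst) (sub_pos.2 ht)]

/-- the third-piece formula -/
noncomputable def pf (b k y τ : ℝ) : ℝ :=
  y * (1 - Real.exp (-τ)) - k * τ + 1 / 2 * (1 / b) * (y * Real.exp (-τ) - k) ^ 2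

lemma pf_deriv (b k : ℝ) (Y T : ℝ → ℝ) (Y' T' t : ℝ) (hY : HasDerivAt Y Y' t)
    (hT : HasDerivAt T T' t) :
    HasDerivAt (fun s => pf b k (Y s) (T s))
      (Y' * (1 - Real.exp (-T t)) + Y t * (Real.exp (-T t) * T') - k * T' +
        (1 / b) * (Y t * Real.exp (-T t) - k) *
          (Y' * Real.exp (-T t) - Y t * (Real.exp (-T t) * T'))) t := by
  unfold pf
  have he := hT.fun_neg.exp
  have := ((hY.fun_mul (he.const_sub 1)).fun_sub (hT.const_mul k)).fun_add
    ((((hY.fun_mul he).sub_const k).fun_pow 2).const_mul (1 / 2 * (1 / b)))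
  refine this.congr_deriv ?_
  push_cast
  ring

open Set Filter Topology in
theorem core (b k : ℝ) (hb : 0 < b) (hk : b < k) (νs : ℝ → ℝ)
    (hνs : ∀ x1 ≤ (0 : ℝ), ∃ η : ℝ, 0 ≤ η ∧ νs x1 = k * Real.exp η ∧
      (b - k * η) * Real.exp η = x1 + b)
    (tau : ℝ → ℝ → ℝ)
    (htau : ∀ a ≤ (0 : ℝ), ∀ y η : ℝ, b < y → b * Real.exp η < y →
      b * (Real.exp η - 1) - y * η = a → tau a y = η)
    (F : ℝ → ℝ → ℝ)
    (hF3 : ∀ x1 x2, νs x1 ≤ x2 → F x1 x2 = pf b k x2 (tau x1 x2))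
    (hF2 : ∀ x1 x2, x2 < νs x1 → k ≤ x2 → F x1 x2 = x2 - k - k * Real.log (x2 / k))
    (hF1 : ∀ x1 x2, x2 < νs x1 → x2 < k → F x1 x2 = 0)
    (f1 f2 : ℝ → ℝ → ℝ)
    (hf1 : ∀ x1 ≤ (0 : ℝ), ∀ x2 : ℝ, 0 ≤ x2 →
      HasDerivWithinAt (fun t => F t x2) (f1 x1 x2) (Set.Iic 0) x1)
    (hf2 : ∀ x1 ≤ (0 : ℝ), ∀ x2 : ℝ, 0 ≤ x2 →
      HasDerivWithinAt (fun t => F x1 t) (f2 x1 x2) (Set.Ici 0) x2) :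
    (∀ x1 ≤ (0 : ℝ), ∀ x2 : ℝ, 0 ≤ x2 →
      (-x1 + x2 - b) * f1 x1 x2 - x2 * f2 x1 x2 = -max (x2 - k) 0) ∧
    (∀ x2 : ℝ, 0 ≤ x2 → f1 0 x2 = f2 0 x2) := by
  have hk0 : 0 < k := hb.trans hk
  have hkν : ∀ x ≤ (0:ℝ), k ≤ νs x := by
    intro x hx
    obtain ⟨η, h0, h1, -⟩ := hνs x hx
    rw [h1]
    have := Real.one_le_exp h0
    nlinarith
  -- monotonicity in a convenient form
  have hle : ∀ t ≤ (0:ℝ), ∀ s, 0 ≤ s → (b - k * s) * Real.exp s ≤ t + b →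
      νs t ≤ k * Real.exp s := by
    intro t ht s hs h
    obtain ⟨η, h0, h1, h2⟩ := hνs t ht
    rw [h1]
    have : η ≤ s := by
      by_contra hc
      push Not at hc
      have := q_anti b k hb hk hs h0 hc
      simp only at this
      linarith
    exact mul_le_mul_of_nonneg_left (Real.exp_le_exp.2 this) hk0.le
  have hmono : ∀ s t, s ≤ t → t ≤ 0 → νs t ≤ νs s := by
    intro s t hst ht
    obtain ⟨η, h0, h1, h2⟩ := hνs s (hst.trans ht)
    rw [h1]
    exact hle t ht η h0 (by linarith)
  have hν0 : νs 0 = k := by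
    refine le_antisymm ?_ (hkν 0 le_rfl)
    simpa using hle 0 le_rfl 0 le_rfl (by simp)
  have hνneg : ∀ t < (0:ℝ), k < νs t := by
    intro t ht
    refine lt_of_le_of_ne (hkν t ht.le) ?_
    intro he
    obtain ⟨η, h0, h1, h2⟩ := hνs t ht.le
    have : Real.exp η = 1 := by
      have : k * Real.exp η = k * 1 := by linarith
      exact mul_left_cancel₀ hk0.ne' this
    have h3 : η = 0 := by simpa using this
    subst h3
    simp at h2
    linarith
  -- low region
  have low1 : ∀ x1 ≤ (0:ℝ), ∀ x2, 0 ≤ x2 → x2 < νs x1 → f1 x1 x2 = 0 := by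
    intro x1 h1 x2 h2 h
    have hA := (hf1 x1 h1 x2 h2).mono (Iic_subset_Iic.2 h1)
    have hB : HasDerivWithinAt (fun t => F t x2) 0 (Iic x1) x1 := by
      apply (hasDerivWithinAt_const x1 (Iic x1) (F x1 x2)).congr
      · intro t ht
        have ht' := hmono t x1 ht h1
        rcases le_or_gt k x2 with hc | hc
        · rw [hF2 t x2 (by linarith) hc, hF2 x1 x2 h hc]
        · rw [hF1 t x2 (by linarith) hc, hF1 x1 x2 h hc]
      · rfl
    exact (uniqueDiffWithinAt_Iic x1).eq_deriv _ hA hB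
  have low2 : ∀ x1 ≤ (0:ℝ), ∀ x2, 0 ≤ x2 → x2 < k → f2 x1 x2 = 0 := by
    intro x1 h1 x2 h2 h
    have hA := (hf2 x1 h1 x2 h2).mono (Ici_subset_Ici.2 h2)
    have hν := hkν x1 h1
    have hB : HasDerivWithinAt (fun t => F x1 t) 0 (Ici x2) x2 := by
      apply (hasDerivWithinAt_const x2 (Ici x2) (0:ℝ)).congr_of_eventuallyEq
      · filter_upwards [mem_nhdsWithin_of_mem_nhds (Iio_mem_nhds h)] with t ht
        have ht : t < k := ht
        exact hF1 x1 t (by linarith) ht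
      · exact hF1 x1 x2 (by linarith) h
    exact (uniqueDiffWithinAt_Ici x2).eq_deriv _ hA hB
  have mid2 : ∀ x1 ≤ (0:ℝ), ∀ x2, k ≤ x2 → x2 < νs x1 → f2 x1 x2 = 1 - k / x2 := by
    intro x1 h1 x2 h2 h
    have hx2 : 0 < x2 := by linarith
    have hA := (hf2 x1 h1 x2 hx2.le).mono (Ici_subset_Ici.2 hx2.le)
    have hB : HasDerivWithinAt (fun t => F x1 t) (1 - k / x2) (Ici x2) x2 := by
      have hD : HasDerivAt (fun t => t - k - k * Real.log (t / k)) (1 - k / x2) x2 := by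
        have := ((hasDerivAt_id x2).sub_const k).fun_sub
          ((((hasDerivAt_id x2).div_const k).log (div_pos hx2 hk0).ne').const_mul k)
        refine this.congr_deriv ?_
        simp only [id]
        field_simp
      apply hD.hasDerivWithinAt.congr_of_eventuallyEq
      · filter_upwards [mem_nhdsWithin_of_mem_nhds (Iio_mem_nhds h), self_mem_nhdsWithin]
          with t ht ht2
        exact hF2 x1 t ht (h2.trans ht2)
      · exact hF2 x1 x2 h h2
    exact (uniqueDiffWithinAt_Ici x2).eq_deriv _ hA hB
  -- high region: the root
  have root : ∀ x1 ≤ (0:ℝ), ∀ x2, νs x1 ≤ x2 → ∃ η, 0 ≤ η ∧ b * Real.exp η < x2 ∧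
      b * (Real.exp η - 1) - x2 * η = x1 := by
    intro x1 h1 x2 h
    obtain ⟨η, h0, hη1, hη2⟩ := hνs x1 h1
    have hc : ContinuousOn (fun s => b * (Real.exp s - 1) - x2 * s) (Icc 0 η) := by fun_prop
    have hmem : x1 ∈ Icc (b * (Real.exp η - 1) - x2 * η) (b * (Real.exp 0 - 1) - x2 * 0) := by
      constructor
      · nlinarith [mul_le_mul_of_nonneg_right h h0]
      · simpa using h1
    obtain ⟨s, hs, hs2⟩ := intermediate_value_Icc' h0 hc hmem
    refine ⟨s, hs.1, ?_, hs2⟩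
    have h3 := Real.exp_le_exp.2 hs.2
    have h4 := Real.exp_pos η
    nlinarith
  have high1 : ∀ x1 ≤ (0:ℝ), ∀ x2, νs x1 ≤ x2 → ∀ η, b * Real.exp η < x2 →
      b * (Real.exp η - 1) - x2 * η = x1 →
      f1 x1 x2 = (x2 * Real.exp (-η) - k) * Real.exp (-η) / b := by
    intro x1 h1 x2 h η hη hφ
    have hkx := (hkν x1 h1).trans h
    have hx2 : 0 < x2 := by linarith
    by_cases hsp : x1 = 0 ∧ x2 = k
    · obtain ⟨rfl, rfl⟩ := hsp
      have hη0 : η = 0 := by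
        rw [← htau 0 le_rfl x2 η hk hη hφ]
        exact htau 0 le_rfl x2 0 hk (by simpa using hk) (by simp)
      have hA := hf1 0 le_rfl x2 hx2.le
      have hB : HasDerivWithinAt (fun t => F t x2) 0 (Iic 0) 0 := by
        apply (hasDerivWithinAt_const (0:ℝ) (Iic 0) (0:ℝ)).congr
        · intro t ht
          rcases eq_or_lt_of_le (show t ≤ 0 from ht) with rfl | ht
          · rw [hF3 _ _ h, htau 0 le_rfl x2 η hk hη hφ, hη0]; simp [pf]
          · rw [hF2 t x2 (hνneg t ht) le_rfl, div_self hk0.ne']; simp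
        · rw [hF3 _ _ h, htau 0 le_rfl x2 η hk hη hφ, hη0]; simp [pf]
      rw [(uniqueDiffWithinAt_Iic 0).eq_deriv _ hA hB, hη0]; simp
    have hc : ∃ c < (0:ℝ), c ≤ x1 ∧ ∀ t, c ≤ t → t ≤ 0 → νs t ≤ x2 := by
      rcases eq_or_lt_of_le h1 with rfl | h1
      · have hlt : k < x2 := lt_of_le_of_ne hkx (fun e => hsp ⟨rfl, e.symm⟩)
        have hl : 0 < Real.log (x2 / k) := Real.log_pos (by rwa [one_lt_div hk0])
        have hq := q_anti b k hb hk (show (0:ℝ) ∈ Ici (0:ℝ) from le_refl (0:ℝ))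
          (show Real.log (x2/k) ∈ Ici (0:ℝ) from hl.le) hl
        simp only [mul_zero, sub_zero, Real.exp_zero, mul_one] at hq
        refine ⟨(b - k * Real.log (x2/k)) * Real.exp (Real.log (x2/k)) - b, by linarith,
          by linarith, ?_⟩
        intro t ht ht0
        have := hle t ht0 _ hl.le (by linarith)
        rwa [Real.exp_log (by positivity), mul_div_cancel₀ _ hk0.ne'] at this
      · exact ⟨x1, h1, le_rfl, fun t ht ht0 => (hmono x1 t ht ht0).trans h⟩
    obtain ⟨c, hc0, hcx, hcν⟩ := hc
    have hψ : HasStrictDerivAt (fun s => b * (Real.exp s - 1) - x2 * s)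
        (b * Real.exp η - x2) η := by
      have hsub : HasStrictDerivAt (fun s => Real.exp s - 1) (Real.exp η) η :=
        (Real.hasStrictDerivAt_exp η).sub_const 1
      have := (hsub.const_mul b).fun_sub ((hasStrictDerivAt_id η).const_mul x2)
      simpa using this
    have hne : b * Real.exp η - x2 ≠ 0 := by linarith
    have hev := hψ.eventually_right_inverse hne
    have hT := hψ.to_localInverse hne
    set T := hψ.localInverse _ _ _ hne with hTdef
    have hTx : T x1 = η := by
      have := HasStrictFDerivAt.localInverse_apply_image (hψ.hasStrictFDerivAt_equiv hne)
      rw [← hφ]; exact this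
    simp only [hφ] at hev hT
    have hTd := hT.hasDerivAt
    have hcont : ∀ᶠ t in 𝓝 x1, b * Real.exp (T t) < x2 := by
      have : ContinuousAt (fun t => b * Real.exp (T t)) x1 :=
        (hTd.continuousAt.rexp).const_mul b
      apply this.eventually_lt continuousAt_const
      simpa [hTx] using hη
    have hD := pf_deriv b k (fun _ => x2) T 0 _ x1 (hasDerivAt_const x1 x2) hTd
    have hA := (hf1 x1 h1 x2 hx2.le).mono (show Icc c 0 ⊆ Iic 0 from fun t ht => ht.2)
    have hFT : ∀ t ∈ Icc c 0, b * (Real.exp (T t) - 1) - x2 * T t = t →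
        b * Real.exp (T t) < x2 → F t x2 = pf b k x2 (T t) := by
      intro t ht e1 e2
      rw [hF3 t x2 (hcν t ht.1 ht.2), htau t ht.2 x2 (T t) (by linarith) e2 e1]
    have hB := (hD.hasDerivWithinAt (s := Icc c 0)).congr_of_eventuallyEq
      (f₁ := fun t => F t x2) (by
        filter_upwards [mem_nhdsWithin_of_mem_nhds hev, mem_nhdsWithin_of_mem_nhds hcont,
          self_mem_nhdsWithin] with t e1 e2 e3
        exact hFT t e3 e1 e2) (hFT x1 ⟨hcx, h1⟩ (by rw [hTx]; exact hφ) (by rw [hTx]; exact hη))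
    rw [((uniqueDiffOn_Icc hc0) x1 ⟨hcx, h1⟩).eq_deriv _ hA hB, hTx]
    have hE : Real.exp η = 1 / Real.exp (-η) := by rw [Real.exp_neg]; simp
    have hEp := Real.exp_pos (-η)
    rw [hE] at hne ⊢
    generalize Real.exp (-η) = E at *
    have hne' : b - E * x2 ≠ 0 := by
      intro h0; apply hne; field_simp; linarith
    field_simp
    ring
  have high2 : ∀ x1 ≤ (0:ℝ), ∀ x2, νs x1 ≤ x2 → ∀ η, b * Real.exp η < x2 → 0 ≤ η →
      b * (Real.exp η - 1) - x2 * η = x1 →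
      f2 x1 x2 = 1 - Real.exp (-η) + (1 + η) * ((x2 * Real.exp (-η) - k) * Real.exp (-η) / b) := by
    intro x1 h1 x2 h η hη hη0 hφ
    have hkx := (hkν x1 h1).trans h
    have hx2 : 0 < x2 := by linarith
    have hne : b * Real.exp η - x2 ≠ 0 := by linarith
    -- local root
    have hTex : ∃ T : ℝ → ℝ, T x2 = η ∧ HasDerivAt T (η / (b * Real.exp η - x2)) x2 ∧
        ∀ᶠ t in 𝓝 x2, b * (Real.exp (T t) - 1) - t * T t = x1 := by
      rcases eq_or_lt_of_le hη0 with rfl | hpos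
      · refine ⟨fun _ => 0, rfl, by simpa using hasDerivAt_const x2 (0:ℝ), ?_⟩
        have : x1 = 0 := by rw [← hφ]; simp
        simp [this]
      · have hψ : HasStrictDerivAt (fun s => (b * (Real.exp s - 1) - x1) / s)
            ((b * Real.exp η * η - (b * (Real.exp η - 1) - x1) * 1) / η ^ 2) η := by
          have hsub : HasStrictDerivAt (fun s => Real.exp s - 1) (Real.exp η) η :=
            (Real.hasStrictDerivAt_exp η).sub_const 1
          have hsub2 : HasStrictDerivAt (fun s => b * (Real.exp s - 1) - x1) (b * Real.exp η) η :=
            (hsub.const_mul b).sub_const x1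
          exact hsub2.fun_div (hasStrictDerivAt_id η) hpos.ne'
        have hval : (b * (Real.exp η - 1) - x1) / η = x2 := by
          rw [← hφ]; field_simp; ring
        have hder : (b * Real.exp η * η - (b * (Real.exp η - 1) - x1) * 1) / η ^ 2
            = (b * Real.exp η - x2) / η := by
          rw [← hφ]; field_simp; ring
        rw [hder] at hψ
        have hne2 : (b * Real.exp η - x2) / η ≠ 0 := div_ne_zero hne hpos.ne'
        have hev := hψ.eventually_right_inverse hne2
        have hT := hψ.to_localInverse hne2
        have hTx := HasStrictFDerivAt.localInverse_apply_image (hψ.hasStrictFDerivAt_equiv hne2)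
        change hψ.localInverse _ _ _ hne2 _ = η at hTx
        set T := hψ.localInverse _ _ _ hne2 with hTdef
        simp only [hval] at hev hT hTx
        refine ⟨T, hTx, by simpa using hT.hasDerivAt, ?_⟩
        have : ∀ᶠ t in 𝓝 x2, 0 < T t :=
          continuousAt_const.eventually_lt hT.hasDerivAt.continuousAt (by rw [hTx]; exact hpos)
        filter_upwards [hev, this] with t e1 e2
        rw [div_eq_iff e2.ne'] at e1
        linarith
    obtain ⟨T, hTx, hTd, hev⟩ := hTex
    have hcont : ∀ᶠ t in 𝓝 x2, b * Real.exp (T t) < t := by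
      have : ContinuousAt (fun t => b * Real.exp (T t)) x2 :=
        (hTd.continuousAt.rexp).const_mul b
      apply this.eventually_lt continuousAt_id
      simpa [hTx] using hη
    have hD := pf_deriv b k (fun t => t) T 1 _ x2 (hasDerivAt_id x2) hTd
    have hA := (hf2 x1 h1 x2 hx2.le).mono (Ici_subset_Ici.2 hx2.le)
    have hFT : ∀ t ∈ Ici x2, b * (Real.exp (T t) - 1) - t * T t = x1 →
        b * Real.exp (T t) < t → F x1 t = pf b k t (T t) := by
      intro t ht e1 e2
      have ht : x2 ≤ t := ht
      rw [hF3 x1 t (by linarith), htau x1 h1 t (T t) (by linarith) e2 e1]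
    have hB := (hD.hasDerivWithinAt (s := Ici x2)).congr_of_eventuallyEq
      (f₁ := fun t => F x1 t) (by
        filter_upwards [mem_nhdsWithin_of_mem_nhds hev, mem_nhdsWithin_of_mem_nhds hcont,
          self_mem_nhdsWithin] with t e1 e2 e3
        exact hFT t e3 e1 e2)
        (hFT x2 (show x2 ≤ x2 from le_rfl) (by rw [hTx]; exact hφ) (by rw [hTx]; exact hη))
    rw [(uniqueDiffWithinAt_Ici x2).eq_deriv _ hA hB, hTx]
    have hE : Real.exp η = 1 / Real.exp (-η) := by rw [Real.exp_neg]; simp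
    have hEp := Real.exp_pos (-η)
    rw [hE] at hne ⊢
    generalize Real.exp (-η) = E at *
    have hne' : b - E * x2 ≠ 0 := by
      intro h0; apply hne; field_simp; linarith
    field_simp
    ring
  constructor
  · intro x1 h1 x2 h2
    rcases le_or_gt (νs x1) x2 with h | h
    · obtain ⟨η, e0, e1, e2⟩ := root x1 h1 x2 h
      have hkx := (hkν x1 h1).trans h
      rw [high1 x1 h1 x2 h η e1 e2, high2 x1 h1 x2 h η e1 e0 e2, max_eq_left (by linarith)]
      have hE : Real.exp η = 1 / Real.exp (-η) := by rw [Real.exp_neg]; simp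
      have hEp := Real.exp_pos (-η)
      rw [hE] at e2
      rw [← e2]
      generalize Real.exp (-η) = E at *
      field_simp
      ring
    · rw [low1 x1 h1 x2 h2 h]
      rcases le_or_gt k x2 with hc | hc
      · have : x2 ≠ 0 := by linarith
        rw [mid2 x1 h1 x2 hc h, max_eq_left (by linarith)]
        field_simp
        ring
      · rw [low2 x1 h1 x2 h2 hc, max_eq_right (by linarith)]
        simp
  · intro x2 h2
    rcases le_or_gt k x2 with h | h
    · have hb2 : b * Real.exp 0 < x2 := by simp; linarith
      rw [high1 0 le_rfl x2 (by linarith) 0 hb2 (by simp),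
        high2 0 le_rfl x2 (by linarith) 0 hb2 le_rfl (by simp)]
      simp
    · rw [low1 0 le_rfl x2 h2 (by linarith), low2 0 le_rfl x2 h2 h]

/-- Fix `κ > β`.  The piecewise-defined function `f = fCand` solves the
fluid PDE for `h(x) = max(x₂ - κ/√n, 0)`: with `f1, f2` its (one-sided at the boundary)
first-order partial derivatives on `Ω`, one has
`(-x₁ + x₂ - β/√n) f1(x) - x₂ f2(x) = -max(x₂ - κ/√n, 0)` for all `x ∈ Ω`, and
`f1(0, x₂) = f2(0, x₂)` for all `x₂ ≥ 0`. -/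
theorem stmt11 (n : ℕ) (hn : 1 ≤ n) (β κ : ℝ) (hβ : 0 < β) (hκ : β < κ)
    (νs : ℝ → ℝ)
    (hνs : ∀ x1 ≤ (0 : ℝ), ∃ η : ℝ, GammaSol n β κ x1 (νs x1) η)
    (tau : ℝ → ℝ → ℝ)
    (htau : ∀ x1 x2 η : ℝ, 0 ≤ η → HitEq n β x1 x2 η →
      (∀ η' : ℝ, 0 ≤ η' → HitEq n β x1 x2 η' → η ≤ η') → tau x1 x2 = η)
    (f1 f2 : ℝ → ℝ → ℝ)
    (hf1 : ∀ x1 ≤ (0 : ℝ), ∀ x2 : ℝ, 0 ≤ x2 →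
      HasDerivWithinAt (fun t => fCand n β κ νs tau t x2) (f1 x1 x2) (Set.Iic 0) x1)
    (hf2 : ∀ x1 ≤ (0 : ℝ), ∀ x2 : ℝ, 0 ≤ x2 →
      HasDerivWithinAt (fun t => fCand n β κ νs tau x1 t) (f2 x1 x2) (Set.Ici 0) x2) :
    (∀ x1 ≤ (0 : ℝ), ∀ x2 : ℝ, 0 ≤ x2 →
      (-x1 + x2 - β / Real.sqrt n) * f1 x1 x2 - x2 * f2 x1 x2 =
        -max (x2 - κ / Real.sqrt n) 0) ∧
    (∀ x2 : ℝ, 0 ≤ x2 → f1 0 x2 = f2 0 x2) := by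
  have hs : 0 < Real.sqrt n := Real.sqrt_pos.2 (by exact_mod_cast hn)
  have hb : 0 < β / Real.sqrt n := div_pos hβ hs
  have hk : β / Real.sqrt n < κ / Real.sqrt n := div_lt_div_of_pos_right hκ hs
  have hκ0 : 0 < κ := hβ.trans hκ
  have hexp : ∀ b a y η : ℝ, b - (a + b) * Real.exp (-η) - η * y * Real.exp (-η) = 0 ↔
      b * (Real.exp η - 1) - y * η = a := by
    intro b a y η
    have h0 := Real.exp_pos η
    rw [Real.exp_neg]
    constructor
    · intro h
      field_simp at h
      linarith
    · intro h
      field_simp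
      linarith
  refine core (β / Real.sqrt n) (κ / Real.sqrt n) hb hk νs ?_ tau ?_
    (fCand n β κ νs tau) ?_ ?_ ?_ f1 f2 hf1 hf2
  · intro x1 hx1
    obtain ⟨η, -, h0, h1, h2⟩ := hνs x1 hx1
    have h3 : νs x1 = κ / Real.sqrt n * Real.exp η := by
      rw [← h2, mul_assoc, ← Real.exp_add]; simp
    refine ⟨η, h0, h3, ?_⟩
    have h4 := (hexp (β / Real.sqrt n) x1 (νs x1) η).1 (by linarith)
    rw [h3] at h4
    linarith
  · intro a ha y η hy hη hφ
    have h0 : 0 ≤ η := by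
      by_contra hc
      push Not at hc
      have := phi_anti (β / Real.sqrt n) y hb η 0 hc (by simpa using hy)
      simp at this
      linarith
    refine htau a y η h0 ((hexp _ _ _ _).2 hφ) ?_
    intro η' _ hη'
    have h2 := (hexp _ _ _ _).1 hη'
    by_contra hc
    push Not at hc
    have := phi_anti (β / Real.sqrt n) y hb η' η hc hη
    linarith
  · intro x1 x2 h
    rw [fCand, if_pos h, pf, one_div_div]
  · intro x1 x2 h h2
    rw [fCand, if_neg (not_le.2 h), if_pos h2]
    congr 3
    field_simp
  · intro x1 x2 h h2
    rw [fCand, if_neg (not_le.2 h), if_neg (not_le.2 h2)]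
end

section
/- The function f^(2) is well-defined on Ω (the pieces agree on the overlaps of the regions), belongs to C²(Ω), and its first-order partial derivatives are: f^(2)_1(x) = 0 on S_0 and on S_1, f^(2)_1(x) = (√n/β)·φ(x_2·e^{−τ(x)})·e^{−τ(x)} on S_2, and f^(2)_1(x) = (√n/β)·e^{−τ(x)} on S_3; and f^(2)_2(x) = 0 on S_0, f^(2)_2(x) = φ(x_2)/x_2 on S_1, f^(2)_2(x) = (1/x_2)·(φ(x_2) − φ(x_2·e^{−τ(x)})) + φ(x_2·e^{−τ(x)})·(√n/β)·e^{−τ(x)}·(τ(x) + 1) on S_2, and f^(2)_2(x) = (√n/β)·e^{−τ(x)}·(τ(x) + 1) on S_3. -/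
open MeasureTheory

/-- The smoothed indicator `φ^{(ℓ,u)}`. -/
noncomputable def phiSm (l u x : ℝ) : ℝ :=
  if x ≤ l then 0
  else if x ≤ (u + l) / 2 then
    (x - l) ^ 2 * (-(x - l) / (((u + l) / 2 - l) ^ 2 * (u - l)) +
      2 / (((u + l) / 2 - l) * (u - l)))
  else if x ≤ u then
    1 - (x - u) ^ 2 * ((x - u) / (((u + l) / 2 - u) ^ 2 * (u - l)) -
      2 / (((u + l) / 2 - u) * (u - l)))
  else 1

open Topology Filter Set

lemma hasDerivAt_posPow (m : ℕ) (x : ℝ) :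
    HasDerivAt (fun x : ℝ => (max x 0) ^ (m + 2)) ((m + 2 : ℝ) * (max x 0) ^ (m + 1)) x := by
  have key : ∀ y : ℝ, y ≠ 0 →
      HasDerivAt (fun x : ℝ => (max x 0) ^ (m + 2)) ((m + 2 : ℝ) * (max y 0) ^ (m + 1)) y := by
    intro y hy
    rcases lt_or_gt_of_ne hy with h | h
    · have h1 : (fun x : ℝ => (max x 0) ^ (m + 2)) =ᶠ[𝓝 y] fun _ => 0 := by
        filter_upwards [Iio_mem_nhds h] with z hz
        simp [max_eq_right (le_of_lt (mem_Iio.1 hz))]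
      rw [max_eq_right h.le]
      simpa using (hasDerivAt_const y (0 : ℝ)).congr_of_eventuallyEq h1
    · have h1 : (fun x : ℝ => (max x 0) ^ (m + 2)) =ᶠ[𝓝 y] fun x => x ^ (m + 2) := by
        filter_upwards [Ioi_mem_nhds h] with z hz
        simp [max_eq_left (le_of_lt (mem_Ioi.1 hz))]
      rw [max_eq_left h.le]
      have := (hasDerivAt_pow (m + 2) y).congr_of_eventuallyEq h1
      simpa using this
  by_cases hx : x = 0
  · subst hx
    refine hasDerivAt_of_hasDerivAt_of_ne
      (g := fun y : ℝ => (m + 2 : ℝ) * (max y 0) ^ (m + 1)) (fun y hy => key y hy) ?_ ?_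
    · fun_prop
    · fun_prop
  · exact key x hx

lemma contDiff_posPow (m : ℕ) : ContDiff ℝ 1 (fun x : ℝ => (max x 0) ^ (m + 2)) := by
  rw [contDiff_one_iff_deriv]
  refine ⟨fun x => (hasDerivAt_posPow m x).differentiableAt, ?_⟩
  have : deriv (fun x : ℝ => (max x 0) ^ (m + 2)) =
      fun x => (m + 2 : ℝ) * (max x 0) ^ (m + 1) := funext fun x => (hasDerivAt_posPow m x).deriv
  rw [this]
  fun_prop

lemma phiSm_eq (l u x : ℝ) (h : l < u) :
    phiSm l u x = (max (x - l) 0) ^ 2 * (4 / (u - l) ^ 2) - (max (x - l) 0) ^ 3 * (4 / (u - l) ^ 3)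
      + (max (x - (u + l) / 2) 0) ^ 2 * (4 / (u - l) ^ 2)
      + (max (x - u) 0) ^ 2 * (4 / (u - l) ^ 2) + (max (x - u) 0) ^ 3 * (4 / (u - l) ^ 3) := by
  have hd : u - l ≠ 0 := by linarith
  have e1 : (u + l) / 2 - l = (u - l) / 2 := by ring
  have e2 : (u + l) / 2 - u = - ((u - l) / 2) := by ring
  unfold phiSm
  rw [e1, e2]
  split_ifs with h1 h2 h3
  · rw [max_eq_right (by linarith), max_eq_right (by linarith), max_eq_right (by linarith)]
    simp
  · rw [max_eq_left (by linarith), max_eq_right (by linarith), max_eq_right (by linarith)]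
    field_simp
    ring
  · rw [max_eq_left (by linarith), max_eq_left (by linarith), max_eq_right (by linarith)]
    field_simp
    ring
  · rw [max_eq_left (by linarith), max_eq_left (by linarith), max_eq_left (by linarith)]
    field_simp
    ring

lemma contDiff_phiSm (l u : ℝ) (h : l < u) : ContDiff ℝ 1 (phiSm l u) := by
  rw [show phiSm l u = _ from funext fun x => phiSm_eq l u x h]
  have c2 := contDiff_posPow 0
  have c3 := contDiff_posPow 1
  have d2 : ∀ a : ℝ, ContDiff ℝ 1 (fun x : ℝ => (max (x - a) 0) ^ 2) := fun a =>
    c2.comp (contDiff_id.sub contDiff_const)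
  have d3 : ∀ a : ℝ, ContDiff ℝ 1 (fun x : ℝ => (max (x - a) 0) ^ 3) := fun a =>
    c3.comp (contDiff_id.sub contDiff_const)
  exact (((((d2 l).mul contDiff_const).sub ((d3 l).mul contDiff_const)).add
    ((d2 _).mul contDiff_const)).add ((d2 u).mul contDiff_const)).add ((d3 u).mul contDiff_const)

lemma phiSm_lo (l u x : ℝ) (h : x ≤ l) : phiSm l u x = 0 := by
  simp [phiSm, h]

lemma phiSm_hi (l u x : ℝ) (hlu : l < u) (h : u ≤ x) : phiSm l u x = 1 := by
  unfold phiSm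
  rw [if_neg (by linarith), if_neg (by linarith)]
  split_ifs with h1
  · have : x = u := le_antisymm h1 h
    simp [this]
  · rfl

lemma contDiff_phiDiv (l u : ℝ) (hl : 0 < l) (h : l < u) :
    ContDiff ℝ 1 (fun s => phiSm l u s / s) := by
  rw [contDiff_iff_contDiffAt]
  intro x
  by_cases hx : x < l
  · have : (fun s => phiSm l u s / s) =ᶠ[𝓝 x] fun _ => 0 := by
      filter_upwards [Iio_mem_nhds hx] with z hz
      simp [phiSm_lo l u z (le_of_lt hz)]
    exact contDiffAt_const.congr_of_eventuallyEq this
  · exact (contDiff_phiSm l u h).contDiffAt.div contDiffAt_id (by simp; linarith)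

noncomputable def PsiF (l u y : ℝ) : ℝ := ∫ s in l..y, phiSm l u s / s
noncomputable def PhiF (l u y : ℝ) : ℝ := ∫ s in l..y, phiSm l u s
noncomputable def gF (b l u y : ℝ) : ℝ := b⁻¹ * PhiF l u y - PsiF l u y

lemma hasDerivAt_PsiF (l u y : ℝ) (hl : 0 < l) (h : l < u) :
    HasDerivAt (PsiF l u) (phiSm l u y / y) y := by
  have hc := (contDiff_phiDiv l u hl h).continuous
  exact intervalIntegral.integral_hasDerivAt_right (hc.intervalIntegrable _ _)
    (hc.stronglyMeasurableAtFilter _ _) hc.continuousAt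

lemma hasDerivAt_PhiF (l u y : ℝ) (h : l < u) :
    HasDerivAt (PhiF l u) (phiSm l u y) y := by
  have hc := (contDiff_phiSm l u h).continuous
  exact intervalIntegral.integral_hasDerivAt_right (hc.intervalIntegrable _ _)
    (hc.stronglyMeasurableAtFilter _ _) hc.continuousAt

lemma hasDerivAt_gF (b l u y : ℝ) (hl : 0 < l) (h : l < u) :
    HasDerivAt (gF b l u) (b⁻¹ * phiSm l u y - phiSm l u y / y) y :=
  ((hasDerivAt_PhiF l u y h).const_mul _).sub (hasDerivAt_PsiF l u y hl h)

lemma contDiff_PsiF (l u : ℝ) (hl : 0 < l) (h : l < u) : ContDiff ℝ 2 (PsiF l u) := by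
  rw [show (2 : WithTop ℕ∞) = 1 + 1 by norm_num, contDiff_succ_iff_deriv]
  refine ⟨fun y => (hasDerivAt_PsiF l u y hl h).differentiableAt, by simp, ?_⟩
  rw [show deriv (PsiF l u) = _ from funext fun y => (hasDerivAt_PsiF l u y hl h).deriv]
  exact contDiff_phiDiv l u hl h

lemma contDiff_gF (b l u : ℝ) (hl : 0 < l) (h : l < u) : ContDiff ℝ 2 (gF b l u) := by
  rw [show (2 : WithTop ℕ∞) = 1 + 1 by norm_num, contDiff_succ_iff_deriv]
  refine ⟨fun y => (hasDerivAt_gF b l u y hl h).differentiableAt, by simp, ?_⟩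
  rw [show deriv (gF b l u) = _ from funext fun y => (hasDerivAt_gF b l u y hl h).deriv]
  exact (contDiff_const.mul (contDiff_phiSm l u h)).sub (contDiff_phiDiv l u hl h)

lemma PsiF_lo (l u y : ℝ) (h : y ≤ l) : PsiF l u y = 0 := by
  unfold PsiF
  rw [intervalIntegral.integral_congr (g := fun _ => (0 : ℝ))]
  · simp
  · intro s hs
    rw [uIcc_of_ge h] at hs
    simp [phiSm_lo l u s hs.2]

lemma PhiF_lo (l u y : ℝ) (h : y ≤ l) : PhiF l u y = 0 := by
  unfold PhiF
  rw [intervalIntegral.integral_congr (g := fun _ => (0 : ℝ))]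
  · simp
  · intro s hs
    rw [uIcc_of_ge h] at hs
    simp [phiSm_lo l u s hs.2]

lemma gF_lo (b l u y : ℝ) (h : y ≤ l) : gF b l u y = 0 := by
  simp [gF, PsiF_lo l u y h, PhiF_lo l u y h]

lemma PsiF_hi (l u y : ℝ) (hl : 0 < l) (h : l < u) (hy : u ≤ y) :
    PsiF l u y = PsiF l u u + Real.log (y / u) := by
  have hc := (contDiff_phiDiv l u hl h).continuous
  unfold PsiF
  rw [← intervalIntegral.integral_add_adjacent_intervals (b := u) (hc.intervalIntegrable _ _)
    (hc.intervalIntegrable _ _)]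
  congr 1
  rw [← integral_one_div_of_pos (by linarith) (by linarith)]
  refine intervalIntegral.integral_congr fun s hs => ?_
  rw [uIcc_of_le hy] at hs
  simp [phiSm_hi l u s h hs.1]

lemma PhiF_hi (l u y : ℝ) (h : l < u) (hy : u ≤ y) :
    PhiF l u y = PhiF l u u + (y - u) := by
  have hc := (contDiff_phiSm l u h).continuous
  unfold PhiF
  rw [← intervalIntegral.integral_add_adjacent_intervals (b := u) (hc.intervalIntegrable _ _)
    (hc.intervalIntegrable _ _)]
  congr 1
  rw [intervalIntegral.integral_congr (g := fun _ => (1 : ℝ))]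
  · simp
  intro s hs
  rw [uIcc_of_le hy] at hs
  simp [phiSm_hi l u s h hs.1]

lemma int_exp (l u y a c : ℝ) (hl : 0 < l) (h : l < u) (hy : 0 < y) :
    ∫ t in a..c, phiSm l u (y * Real.exp (-t)) =
      PsiF l u (y * Real.exp (-a)) - PsiF l u (y * Real.exp (-c)) := by
  have hc := (contDiff_phiSm l u h).continuous
  have hd : ∀ t : ℝ, HasDerivAt (fun t => - PsiF l u (y * Real.exp (-t)))
      (phiSm l u (y * Real.exp (-t))) t := by
    intro t
    have h1 : HasDerivAt (fun t : ℝ => y * Real.exp (-t)) (y * (Real.exp (-t) * (-1))) t :=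
      ((hasDerivAt_neg t).exp).const_mul y
    have h2 := ((hasDerivAt_PsiF l u (y * Real.exp (-t)) hl h).comp t h1).neg
    refine h2.congr_deriv (Eq.symm ?_)
    have he := (Real.exp_pos (-t)).ne'
    have hy2 : y * Real.exp (-t) ≠ 0 := mul_ne_zero hy.ne' he
    calc _ = phiSm l u (y * Real.exp (-t)) / (y * Real.exp (-t)) * (y * Real.exp (-t)) :=
          (div_mul_cancel₀ _ hy2).symm
      _ = _ := by ring
  rw [intervalIntegral.integral_eq_sub_of_hasDerivAt (fun t _ => hd t)]
  · ring
  · exact Continuous.intervalIntegrable (by fun_prop) _ _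

lemma localT (b p1 p2 η : ℝ) (hne : b * Real.exp η - p2 ≠ 0)
    (h : b * (Real.exp η - 1) - η * p2 = p1) :
    ∃ T : ℝ × ℝ → ℝ, ContDiffAt ℝ 2 T (p1, p2) ∧ T (p1, p2) = η ∧
      ∀ᶠ q in 𝓝 (p1, p2), b * (Real.exp (T q) - 1) - T q * q.2 = q.1 := by
  set d := b * Real.exp η - p2 with hd
  let f : ℝ × ℝ → ℝ × ℝ := fun z => (b * (Real.exp z.1 - 1) - z.1 * z.2, z.2)
  let A : ℝ × ℝ →L[ℝ] ℝ × ℝ :=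
    (d • ContinuousLinearMap.fst ℝ ℝ ℝ - η • ContinuousLinearMap.snd ℝ ℝ ℝ).prod
      (ContinuousLinearMap.snd ℝ ℝ ℝ)
  let B : ℝ × ℝ →L[ℝ] ℝ × ℝ :=
    (d⁻¹ • (ContinuousLinearMap.fst ℝ ℝ ℝ + η • ContinuousLinearMap.snd ℝ ℝ ℝ)).prod
      (ContinuousLinearMap.snd ℝ ℝ ℝ)
  have hAB : Function.LeftInverse B A := by
    rintro ⟨x, y⟩
    simp [A, B]
    field_simp
    ring
  have hBA : Function.RightInverse B A := by
    rintro ⟨x, y⟩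
    simp [A, B]
    field_simp
    simp
  let e : (ℝ × ℝ) ≃L[ℝ] (ℝ × ℝ) := ContinuousLinearEquiv.equivOfInverse A B hAB hBA
  have hf : ContDiffAt ℝ 2 f (η, p2) := by
    have : ContDiff ℝ 2 f := by fun_prop
    exact this.contDiffAt
  have hf' : HasFDerivAt f (e : ℝ × ℝ →L[ℝ] ℝ × ℝ) (η, p2) := by
    have h1 : HasFDerivAt (fun z : ℝ × ℝ => z.1) (ContinuousLinearMap.fst ℝ ℝ ℝ) (η, p2) :=
      hasFDerivAt_fst
    have h2 : HasFDerivAt (fun z : ℝ × ℝ => z.2) (ContinuousLinearMap.snd ℝ ℝ ℝ) (η, p2) :=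
      hasFDerivAt_snd
    have h3 := ((((h1.exp).sub_const 1).const_mul b).sub (h1.mul h2)).prodMk h2
    refine h3.congr_fderiv ?_
    ext <;> simp [e, A, hd]
  have hfp : f (η, p2) = (p1, p2) := by simp [f, h]
  have hloc := hf.to_localInverse hf' (by norm_num)
  rw [hfp] at hloc
  refine ⟨fun q => (hf.localInverse hf' (by norm_num) q).1, contDiffAt_fst.comp _ hloc, ?_, ?_⟩
  · have := hf.localInverse_apply_image hf' (by norm_num)
    rw [hfp] at this
    simp only [this]
  · have hs : HasStrictFDerivAt f (e : ℝ × ℝ →L[ℝ] ℝ × ℝ) (η, p2) :=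
      hf.hasStrictFDerivAt' hf' (by norm_num)
    have := hs.eventually_right_inverse
    rw [hfp] at this
    filter_upwards [this] with q hq
    have hq' : f (hf.localInverse hf' (by norm_num) q) = q := hq
    have e1 := congrArg Prod.fst hq'
    have e2 := congrArg Prod.snd hq'
    simp only [f] at e1 e2
    rw [e2] at e1
    exact e1

lemma exp_sub_lt (s t : ℝ) (h : s < t) :
    Real.exp t - Real.exp s < (t - s) * Real.exp t := by
  have h1 := Real.add_one_lt_exp (x := s - t) (by linarith)
  have h2 := mul_lt_mul_of_pos_right h1 (Real.exp_pos t)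
  rw [← Real.exp_add] at h2
  have e : s - t + t = s := by ring
  rw [e] at h2
  linarith

lemma G_anti (b x2 s t : ℝ) (hb : 0 < b) (h : s < t) (ht : b * Real.exp t ≤ x2) :
    b * (Real.exp t - 1) - t * x2 < b * (Real.exp s - 1) - s * x2 := by
  have h1 := mul_lt_mul_of_pos_left (exp_sub_lt s t h) hb
  have h2 := mul_le_mul_of_nonneg_left ht (sub_pos.2 h).le
  linarith

lemma H_anti (b k s t : ℝ) (hb : 0 < b) (hk : b < k) (hs : 0 ≤ s) (h : s < t) :
    b * (Real.exp t - 1) - t * (k * Real.exp t) < b * (Real.exp s - 1) - s * (k * Real.exp s) := by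
  have h1 := exp_sub_lt s t h
  have h2 : 0 < Real.exp t - Real.exp s := sub_pos.2 (Real.exp_lt_exp.2 h)
  have h3 : Real.exp t - Real.exp s < t * Real.exp t - s * Real.exp s := by
    nlinarith [mul_nonneg hs h2.le]
  have h4 : b * (Real.exp t - Real.exp s) < k * (Real.exp t - Real.exp s) :=
    mul_lt_mul_of_pos_right hk h2
  have h5 := mul_lt_mul_of_pos_left h3 (hb.trans hk)
  linarith

def TauProp (b : ℝ) (tau : ℝ → ℝ → ℝ) : Prop :=
  ∀ x1 x2 η : ℝ, 0 ≤ η → b * (Real.exp η - 1) - η * x2 = x1 →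
      (∀ η' : ℝ, 0 ≤ η' → b * (Real.exp η' - 1) - η' * x2 = x1 → η ≤ η') → tau x1 x2 = η

def NuProp (b k : ℝ) (ν : ℝ → ℝ) : Prop :=
  ∀ x1 ≤ (0 : ℝ), ∃ η : ℝ, 0 ≤ η ∧ ν x1 = k * Real.exp η ∧
    b * (Real.exp η - 1) - η * ν x1 = x1

lemma tau_uniq {b : ℝ} {tau : ℝ → ℝ → ℝ} (hb : 0 < b) (htau : TauProp b tau) {x1 x2 T : ℝ}
    (h0 : 0 ≤ T) (hT : b * (Real.exp T - 1) - T * x2 = x1) (hx : b * Real.exp T < x2) :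
    tau x1 x2 = T := by
  refine htau x1 x2 T h0 hT fun η' h0' h' => ?_
  by_contra hc
  push Not at hc
  have := G_anti b x2 η' T hb hc hx.le
  linarith

lemma tau_spec {b k : ℝ} {tau : ℝ → ℝ → ℝ} {ν : ℝ → ℝ} (hb : 0 < b) (hk : b < k)
    (htau : TauProp b tau) (hν : NuProp b k ν) {x1 x2 : ℝ} (hx1 : x1 ≤ 0) (hx : ν x1 ≤ x2) :
    0 ≤ tau x1 x2 ∧ b * (Real.exp (tau x1 x2) - 1) - tau x1 x2 * x2 = x1 ∧
      k * Real.exp (tau x1 x2) ≤ x2 := by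
  obtain ⟨η, h0, h1, h2⟩ := hν x1 hx1
  have hc : ContinuousOn (fun s => b * (Real.exp s - 1) - s * x2) (Icc 0 η) := by fun_prop
  have hm : x1 ∈ Icc (b * (Real.exp η - 1) - η * x2) (b * (Real.exp 0 - 1) - 0 * x2) := by
    constructor
    · have := mul_le_mul_of_nonneg_left hx h0
      linarith
    · simpa using hx1
  obtain ⟨T, ⟨hT0, hTη⟩, hT⟩ := intermediate_value_Icc' h0 hc hm
  simp only at hT
  have hk0 : 0 < k := hb.trans hk
  have h3 : k * Real.exp T ≤ x2 :=
    (mul_le_mul_of_nonneg_left (Real.exp_le_exp.2 hTη) hk0.le).trans (h1 ▸ hx)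
  have h4 : tau x1 x2 = T := tau_uniq hb htau hT0 hT
    ((mul_lt_mul_of_pos_right hk (Real.exp_pos T)).trans_le h3)
  rw [h4]
  exact ⟨hT0, hT, h3⟩

lemma root_ge {b k : ℝ} {ν : ℝ → ℝ} (hb : 0 < b) (hk : b < k)
    (hν : NuProp b k ν) {x1 x2 T : ℝ} (hx1 : x1 ≤ 0) (hx : x2 ≤ ν x1) (hT0 : 0 ≤ T)
    (hT : b * (Real.exp T - 1) - T * x2 = x1) : ν x1 ≤ k * Real.exp T := by
  obtain ⟨η, h0, h1, h2⟩ := hν x1 hx1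
  have hk0 : 0 < k := hb.trans hk
  rw [h1]
  refine mul_le_mul_of_nonneg_left (Real.exp_le_exp.2 ?_) hk0.le
  by_contra hc
  push Not at hc
  have h3 := G_anti b (ν x1) T η hb hc
    (h1 ▸ (mul_lt_mul_of_pos_right hk (Real.exp_pos η)).le)
  have h4 := mul_le_mul_of_nonneg_left hx hT0
  linarith

lemma nu_ge {b k : ℝ} {ν : ℝ → ℝ} (hk : 0 < k) (hν : NuProp b k ν) {x1 : ℝ} (hx1 : x1 ≤ 0) :
    k ≤ ν x1 := by
  obtain ⟨η, h0, h1, h2⟩ := hν x1 hx1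
  rw [h1]
  have := Real.one_le_exp h0
  nlinarith

lemma mul_exp_neg_le {x k t : ℝ} (h : x ≤ k * Real.exp t) : x * Real.exp (-t) ≤ k := by
  have := mul_le_mul_of_nonneg_right h (Real.exp_pos (-t)).le
  rwa [mul_assoc, ← Real.exp_add, add_neg_cancel, Real.exp_zero, mul_one] at this

lemma le_mul_exp_neg {x k t : ℝ} (h : k * Real.exp t ≤ x) : k ≤ x * Real.exp (-t) := by
  have := mul_le_mul_of_nonneg_right h (Real.exp_pos (-t)).le
  rwa [mul_assoc, ← Real.exp_add, add_neg_cancel, Real.exp_zero, mul_one] at this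

lemma nu_le_nu {b k k' : ℝ} {tau : ℝ → ℝ → ℝ} {ν ν' : ℝ → ℝ} (hb : 0 < b) (hk : b < k)
    (hkk : k < k') (htau : TauProp b tau) (hν : NuProp b k ν) (hν' : NuProp b k' ν')
    {x1 : ℝ} (hx1 : x1 ≤ 0) : ν x1 ≤ ν' x1 := by
  by_contra hc
  push Not at hc
  obtain ⟨h0, h1, h2⟩ := tau_spec hb (hk.trans hkk) htau hν' hx1 hc.le
  have h3 := root_ge hb hk hν hx1 le_rfl h0 h1
  have h4 := mul_lt_mul_of_pos_right hkk (Real.exp_pos (tau x1 (ν x1)))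
  linarith

/-- The function of the lemma. -/
noncomputable def FF (b l u : ℝ) (ν : ℝ → ℝ) (tau : ℝ → ℝ → ℝ) (x1 x2 : ℝ) : ℝ :=
  PsiF l u x2 + (open Classical in
    if ν x1 ≤ x2 then gF b l u (x2 * Real.exp (-tau x1 x2)) else 0)

noncomputable def FF1 (b l u : ℝ) (ν : ℝ → ℝ) (tau : ℝ → ℝ → ℝ) (x1 x2 : ℝ) : ℝ :=
  open Classical in
  if ν x1 ≤ x2 then b⁻¹ * phiSm l u (x2 * Real.exp (-tau x1 x2)) * Real.exp (-tau x1 x2) else 0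

noncomputable def FF2 (b l u : ℝ) (ν : ℝ → ℝ) (tau : ℝ → ℝ → ℝ) (x1 x2 : ℝ) : ℝ :=
  open Classical in
  if ν x1 ≤ x2 then 1 / x2 * (phiSm l u x2 - phiSm l u (x2 * Real.exp (-tau x1 x2))) +
    phiSm l u (x2 * Real.exp (-tau x1 x2)) * b⁻¹ * Real.exp (-tau x1 x2) * (tau x1 x2 + 1)
  else phiSm l u x2 / x2

abbrev OmegaS : Set (ℝ × ℝ) := Iic (0 : ℝ) ×ˢ Ici (0 : ℝ)

lemma FF_regionB {b l u : ℝ} {ν : ℝ → ℝ} {tau : ℝ → ℝ → ℝ} (hb : 0 < b) (hl : b < l)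
    (hν : NuProp b l ν) {x1 x2 : ℝ} (hx1 : x1 ≤ 0) (hx : x2 < ν x1) :
    (fun q : ℝ × ℝ => FF b l u ν tau q.1 q.2) =ᶠ[𝓝[OmegaS] (x1, x2)]
      fun q => PsiF l u q.2 := by
  have hl0 : 0 < l := hb.trans hl
  have key : ∀ᶠ q : ℝ × ℝ in 𝓝[OmegaS] (x1, x2), q.2 < ν q.1 := by
    by_cases h : x2 < l
    · have h1 : ∀ᶠ q : ℝ × ℝ in 𝓝 (x1, x2), q.2 < l :=
        continuous_snd.continuousAt.eventually_lt continuousAt_const h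
      filter_upwards [mem_nhdsWithin_of_mem_nhds h1, self_mem_nhdsWithin] with q hq hΩ
      exact lt_of_lt_of_le hq (nu_ge hl0 hν hΩ.1)
    · push Not at h
      have hx0 : 0 < x2 := hl0.trans_le h
      let K : ℝ → ℝ := fun y => b * (Real.exp (Real.log (y / l)) - 1)
        - Real.log (y / l) * (l * Real.exp (Real.log (y / l)))
      have hK : x1 < K x2 := by
        obtain ⟨η, h0, h1, h2⟩ := hν x1 hx1
        have e : l * Real.exp (Real.log (x2 / l)) = x2 := by
          rw [Real.exp_log (by positivity)]; field_simp
        have hlt : Real.log (x2 / l) < η := by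
          by_contra hc
          push Not at hc
          have := mul_le_mul_of_nonneg_left (Real.exp_le_exp.2 hc) hl0.le
          rw [e] at this
          linarith
        have := H_anti b l _ η hb hl (Real.log_nonneg ((one_le_div hl0).2 h)) hlt
        rw [h1] at h2
        simp only [K]
        linarith
      have hcK : ContinuousAt K x2 := by
        have : ContinuousAt (fun y => Real.log (y / l)) x2 :=
          (continuousAt_id.div_const l).log (by simp; constructor <;> positivity)
        simp only [K]
        fun_prop
      have h1 : ∀ᶠ q : ℝ × ℝ in 𝓝 (x1, x2), q.1 < K q.2 :=
        continuous_fst.continuousAt.eventually_lt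
          (ContinuousAt.comp (f := Prod.snd) (x := (x1, x2)) hcK continuous_snd.continuousAt) hK
      filter_upwards [mem_nhdsWithin_of_mem_nhds h1, self_mem_nhdsWithin] with q hq hΩ
      by_contra hc
      push Not at hc
      have hq2 := (nu_ge hl0 hν hΩ.1).trans hc
      obtain ⟨η, h0, h1, h2⟩ := hν q.1 hΩ.1
      have hq0 : 0 < q.2 := hl0.trans_le hq2
      have e : l * Real.exp (Real.log (q.2 / l)) = q.2 := by
        rw [Real.exp_log (by positivity)]; field_simp
      have hge : η ≤ Real.log (q.2 / l) := by
        rw [Real.le_log_iff_exp_le (by positivity), le_div_iff₀ hl0]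
        linarith
      rw [h1] at h2
      have hq' : q.1 < K q.2 := hq
      simp only [K] at hq'
      rcases hge.eq_or_lt with he | he
      · rw [← he] at hq'; linarith
      · have := H_anti b l η _ hb hl h0 he
        linarith
  filter_upwards [key] with q hq
  simp [FF, not_le.2 hq]

lemma FF_regionA {b l u : ℝ} {ν : ℝ → ℝ} {tau : ℝ → ℝ → ℝ} (hb : 0 < b) (hl : b < l)
    (htau : TauProp b tau)
    (hν : NuProp b l ν) {x1 x2 : ℝ} (hx1 : x1 ≤ 0) (hx : ν x1 ≤ x2) :
    ∃ T : ℝ × ℝ → ℝ, ContDiffAt ℝ 2 T (x1, x2) ∧ T (x1, x2) = tau x1 x2 ∧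
      (∀ᶠ q in 𝓝 (x1, x2), b * (Real.exp (T q) - 1) - T q * q.2 = q.1) ∧
      (fun q : ℝ × ℝ => FF b l u ν tau q.1 q.2) =ᶠ[𝓝[OmegaS] (x1, x2)]
        fun q => PsiF l u q.2 + gF b l u (q.2 * Real.exp (-T q)) := by
  obtain ⟨h0, h1, h2⟩ := tau_spec hb hl htau hν hx1 hx
  have h3 : b * Real.exp (tau x1 x2) < x2 :=
    (mul_lt_mul_of_pos_right hl (Real.exp_pos _)).trans_le h2
  obtain ⟨T, hT, hTp, hTe⟩ := localT b x1 x2 _ (by linarith) h1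
  refine ⟨T, hT, hTp, hTe, ?_⟩
  have h4 : ∀ᶠ q in 𝓝 (x1, x2), b * Real.exp (T q) < q.2 := by
    have hc := hT.continuousAt
    refine ContinuousAt.eventually_lt (by fun_prop) continuous_snd.continuousAt ?_
    rw [hTp]; exact h3
  have h5 : ∀ᶠ q : ℝ × ℝ in 𝓝 (x1, x2), b < q.2 :=
    ContinuousAt.eventually_lt continuousAt_const continuous_snd.continuousAt
      (hl.trans_le ((nu_ge (hb.trans hl) hν hx1).trans hx))
  filter_upwards [mem_nhdsWithin_of_mem_nhds hTe, mem_nhdsWithin_of_mem_nhds h4,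
    mem_nhdsWithin_of_mem_nhds h5, self_mem_nhdsWithin] with q hq hq' hbq hΩ
  have hbq : b < q.2 := hbq
  have hq1 : q.1 ≤ 0 := hΩ.1
  have hq : b * (Real.exp (T q) - 1) - T q * q.2 = q.1 := hq
  have hq' : b * Real.exp (T q) < q.2 := hq'
  have hT0 : 0 ≤ T q := by
    by_contra hc
    push Not at hc
    have := G_anti b q.2 (T q) 0 hb hc (by simpa using le_of_lt hbq)
    simp at this
    linarith
  unfold FF
  split_ifs with hc
  · rw [tau_uniq hb htau hT0 hq hq']
  · push Not at hc
    have := root_ge hb hl hν hq1 hc.le hT0 hq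
    rw [gF_lo _ _ _ _ (mul_exp_neg_le (hc.le.trans this))]

lemma FF_contDiffOn {b l u : ℝ} {ν : ℝ → ℝ} {tau : ℝ → ℝ → ℝ} (hb : 0 < b) (hl : b < l)
    (hlu : l < u) (htau : TauProp b tau) (hν : NuProp b l ν) :
    ContDiffOn ℝ 2 (fun p : ℝ × ℝ => FF b l u ν tau p.1 p.2) OmegaS := by
  have hl0 : 0 < l := hb.trans hl
  rintro ⟨x1, x2⟩ hp
  have hx1 : x1 ≤ 0 := hp.1
  have hΨ : ContDiffAt ℝ 2 (fun q : ℝ × ℝ => PsiF l u q.2) (x1, x2) :=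
    ((contDiff_PsiF l u hl0 hlu).comp contDiff_snd).contDiffAt
  by_cases h : ν x1 ≤ x2
  · obtain ⟨T, hT, hTp, hTe, heq⟩ := FF_regionA (u := u) hb hl htau hν hx1 h
    have h1 : ContDiffAt ℝ 2 (fun q : ℝ × ℝ => q.2 * Real.exp (-T q)) (x1, x2) :=
      contDiffAt_snd.mul hT.neg.exp
    have h2 : ContDiffAt ℝ 2 (fun q : ℝ × ℝ => gF b l u (q.2 * Real.exp (-T q))) (x1, x2) :=
      (contDiff_gF b l u hl0 hlu).contDiffAt.comp (x1, x2) h1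
    exact (hΨ.add h2).contDiffWithinAt.congr_of_eventuallyEq_of_mem heq hp
  · exact hΨ.contDiffWithinAt.congr_of_eventuallyEq_of_mem
      (FF_regionB hb hl hν hx1 (not_le.1 h)) hp

lemma FF_hasDeriv {b l u : ℝ} {ν : ℝ → ℝ} {tau : ℝ → ℝ → ℝ} (hb : 0 < b) (hl : b < l)
    (hlu : l < u) (htau : TauProp b tau) (hν : NuProp b l ν) {x1 x2 : ℝ} (hx1 : x1 ≤ 0)
    (hx2 : 0 ≤ x2) :
    HasDerivWithinAt (fun t => FF b l u ν tau t x2) (FF1 b l u ν tau x1 x2) (Iic 0) x1 ∧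
      HasDerivWithinAt (fun t => FF b l u ν tau x1 t) (FF2 b l u ν tau x1 x2) (Ici 0) x2 := by
  have hl0 : 0 < l := hb.trans hl
  have t1 : Tendsto (fun t : ℝ => (t, x2)) (𝓝[Iic 0] x1) (𝓝[OmegaS] (x1, x2)) := by
    refine tendsto_nhdsWithin_iff.2 ⟨?_, ?_⟩
    · exact (Continuous.tendsto (by fun_prop : Continuous fun t : ℝ => (t, x2)) x1).mono_left
        nhdsWithin_le_nhds
    · filter_upwards [self_mem_nhdsWithin] with t ht
      exact ⟨ht, hx2⟩
  have t2 : Tendsto (fun t : ℝ => (x1, t)) (𝓝[Ici 0] x2) (𝓝[OmegaS] (x1, x2)) := by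
    refine tendsto_nhdsWithin_iff.2 ⟨?_, ?_⟩
    · exact (Continuous.tendsto (by fun_prop : Continuous fun t : ℝ => (x1, t)) x2).mono_left
        nhdsWithin_le_nhds
    · filter_upwards [self_mem_nhdsWithin] with t ht
      exact ⟨hx1, ht⟩
  have s1 : Tendsto (fun t : ℝ => (t, x2)) (𝓝 x1) (𝓝 (x1, x2)) :=
    Continuous.tendsto (by fun_prop : Continuous fun t : ℝ => (t, x2)) x1
  have s2 : Tendsto (fun t : ℝ => (x1, t)) (𝓝 x2) (𝓝 (x1, x2)) :=
    Continuous.tendsto (by fun_prop : Continuous fun t : ℝ => (x1, t)) x2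
  have hΨ := hasDerivAt_PsiF l u x2 hl0 hlu
  by_cases h : ν x1 ≤ x2
  · obtain ⟨T, hT, hTp, hTe, heq⟩ := FF_regionA (u := u) hb hl htau hν hx1 h
    obtain ⟨h0, h1, h2⟩ := tau_spec hb hl htau hν hx1 h
    simp only [FF1, FF2, if_pos h]
    have hY := le_mul_exp_neg h2
    set τ := tau x1 x2 with hτ
    have h3 : b * Real.exp τ < x2 :=
      (mul_lt_mul_of_pos_right hl (Real.exp_pos _)).trans_le h2
    have hx0 : 0 < x2 := lt_trans (by positivity) h3
    have hTd := (hT.differentiableAt (by norm_num)).hasFDerivAt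
    have hg := hasDerivAt_gF b l u (x2 * Real.exp (-τ)) hl0 hlu
    have hE : Real.exp (-τ) * Real.exp τ = 1 := by rw [← Real.exp_add]; simp
    have hE0 := Real.exp_pos τ
    have hE1 : Real.exp (-τ) = (Real.exp τ)⁻¹ := Real.exp_neg τ
    constructor
    · have dT : HasDerivAt (fun t => T (t, x2)) (fderiv ℝ T (x1, x2) (1, 0)) x1 :=
        hTd.comp_hasDerivAt x1 ((hasDerivAt_id x1).prodMk (hasDerivAt_const x1 x2))
      set a := fderiv ℝ T (x1, x2) (1, 0)
      have dI : (b * Real.exp τ - x2) * a = 1 := by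
        have d1 := ((dT.exp.sub_const 1).const_mul b).sub (dT.mul_const x2)
        have d2 := (hasDerivAt_id x1).congr_of_eventuallyEq (s1.eventually hTe)
        have := d1.unique d2
        simp only [hTp] at this
        linarith
      have dY : HasDerivAt (fun t => x2 * Real.exp (-T (t, x2)))
          (x2 * (Real.exp (-T (x1, x2)) * -a)) x1 := dT.neg.exp.const_mul x2
      rw [hTp] at dY
      have hg' : HasDerivAt (gF b l u) (b⁻¹ * phiSm l u (x2 * Real.exp (-τ)) -
          phiSm l u (x2 * Real.exp (-τ)) / (x2 * Real.exp (-τ)))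
          (x2 * Real.exp (-T (x1, x2))) := by rw [hTp]; exact hg
      have dF := (HasDerivAt.comp x1 hg' dY).const_add (PsiF l u x2)
      have dF' := dF.hasDerivWithinAt (s := Iic 0)
      have := dF'.congr_of_eventuallyEq_of_mem (t1.eventually heq) hx1
      refine this.congr_deriv (Eq.symm ?_)
      have ha : a = (b * Real.exp τ - x2)⁻¹ := by
        field_simp [show b * Real.exp τ - x2 ≠ 0 by linarith]; linarith
      have hne : b * Real.exp τ - x2 ≠ 0 := by linarith
      generalize phiSm l u (x2 * Real.exp (-τ)) = P
      rw [ha, hE1]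
      generalize Real.exp τ = E at *
      field_simp
      ring
    · have dT : HasDerivAt (fun t => T (x1, t)) (fderiv ℝ T (x1, x2) (0, 1)) x2 :=
        hTd.comp_hasDerivAt x2 ((hasDerivAt_const x2 x1).prodMk (hasDerivAt_id x2))
      set a := fderiv ℝ T (x1, x2) (0, 1)
      have dI : (b * Real.exp τ - x2) * a = τ := by
        have d1 := ((dT.exp.sub_const 1).const_mul b).sub (dT.mul (hasDerivAt_id x2))
        have d2 := (hasDerivAt_const x2 x1).congr_of_eventuallyEq (s2.eventually hTe)
        have := d1.unique d2
        simp only [hTp, id] at this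
        linarith
      have dY : HasDerivAt (fun t => t * Real.exp (-T (x1, t)))
          (1 * Real.exp (-T (x1, x2)) + x2 * (Real.exp (-T (x1, x2)) * -a)) x2 :=
        (hasDerivAt_id x2).mul dT.neg.exp
      rw [hTp] at dY
      have hg' : HasDerivAt (gF b l u) (b⁻¹ * phiSm l u (x2 * Real.exp (-τ)) -
          phiSm l u (x2 * Real.exp (-τ)) / (x2 * Real.exp (-τ)))
          (x2 * Real.exp (-T (x1, x2))) := by rw [hTp]; exact hg
      have dF := hΨ.add (HasDerivAt.comp x2 hg' dY)
      have dF' := dF.hasDerivWithinAt (s := Ici 0)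
      have := dF'.congr_of_eventuallyEq_of_mem (t2.eventually heq) hx2
      refine this.congr_deriv (Eq.symm ?_)
      have hne : b * Real.exp τ - x2 ≠ 0 := by linarith
      have ha : a = τ * (b * Real.exp τ - x2)⁻¹ := by
        field_simp; linarith
      generalize phiSm l u (x2 * Real.exp (-τ)) = P
      generalize phiSm l u x2 = Q
      rw [ha, hE1]
      generalize Real.exp τ = E at *
      field_simp
      ring
  · have heq := FF_regionB (u := u) (tau := tau) hb hl hν hx1 (not_le.1 h)
    simp only [FF1, FF2, if_neg h]
    exact ⟨(hasDerivWithinAt_const x1 (Iic 0) (PsiF l u x2)).congr_of_eventuallyEq_of_mem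
      (t1.eventually heq) hx1,
      hΨ.hasDerivWithinAt.congr_of_eventuallyEq_of_mem (t2.eventually heq) hx2⟩

lemma Y_eq {b l : ℝ} {ν : ℝ → ℝ} {tau : ℝ → ℝ → ℝ} (hb : 0 < b) (hl : b < l)
    (htau : TauProp b tau) (hν : NuProp b l ν) {x1 x2 : ℝ} (hx1 : x1 ≤ 0)
    (h : ν x1 ≤ x2) (h' : x2 ≤ ν x1) : x2 * Real.exp (-tau x1 x2) = l := by
  obtain ⟨h0, h1, h2⟩ := tau_spec hb hl htau hν hx1 h
  exact le_antisymm (mul_exp_neg_le (h'.trans (root_ge hb hl hν hx1 h' h0 h1))) (le_mul_exp_neg h2)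

lemma FF_lo {b l u : ℝ} {ν : ℝ → ℝ} {tau : ℝ → ℝ → ℝ} (hb : 0 < b) (hl : b < l)
    (htau : TauProp b tau) (hν : NuProp b l ν) {x1 x2 : ℝ} (hx1 : x1 ≤ 0)
    (h' : x2 ≤ ν x1) : FF b l u ν tau x1 x2 = PsiF l u x2 ∧ FF1 b l u ν tau x1 x2 = 0 ∧
      FF2 b l u ν tau x1 x2 = phiSm l u x2 / x2 := by
  unfold FF FF1 FF2
  split_ifs with h
  · rw [Y_eq hb hl htau hν hx1 h h', gF_lo _ _ _ _ le_rfl, phiSm_lo _ _ _ le_rfl]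
    refine ⟨by ring, by ring, by ring⟩
  · simp

lemma mul_exp_neg_log {x k : ℝ} (hx : 0 < x) (hk : 0 < k) :
    x * Real.exp (-Real.log (x / k)) = k := by
  rw [Real.exp_neg, Real.exp_log (by positivity)]
  field_simp

/-- Lemma `phi2`.  Fix `β < κ₁ < κ₂`, let `φ = φ^{(κ₁/√n, κ₂/√n)}`, let
`ν*_{κ₁}, ν*_{κ₂}` parametrize the curves `Γ^{(κ₁)}, Γ^{(κ₂)}` delimiting the regions
`S₀, S₁, S₂, S₃`, and let `τ(x)` be the smallest nonnegative solution of the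
hitting-time equation wherever it exists.  There is a function `F = f^{(2)}` on `Ω`
agreeing with all the prescribed piecewise formulas (so the pieces agree on the
overlaps of the regions), belonging to `C²(Ω)`, whose first-order (one-sided) partial
derivatives `F1, F2` are given on `S₀, S₁, S₂, S₃` by the stated formulas. -/
theorem stmt13 (n : ℕ) (hn : 1 ≤ n) (β κ1 κ2 : ℝ) (hβ : 0 < β)
    (hκ1 : β < κ1) (hκ12 : κ1 < κ2)
    (νs1 νs2 : ℝ → ℝ)
    (hνs1 : ∀ x1 ≤ (0 : ℝ), ∃ η : ℝ, GammaSol n β κ1 x1 (νs1 x1) η)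
    (hνs2 : ∀ x1 ≤ (0 : ℝ), ∃ η : ℝ, GammaSol n β κ2 x1 (νs2 x1) η)
    (tau : ℝ → ℝ → ℝ)
    (htau : ∀ x1 x2 η : ℝ, 0 ≤ η → HitEq n β x1 x2 η →
      (∀ η' : ℝ, 0 ≤ η' → HitEq n β x1 x2 η' → η ≤ η') → tau x1 x2 = η) :
    ∃ F F1 F2 : ℝ → ℝ → ℝ,
      -- defining pieces (their simultaneous validity encodes well-definedness)
      -- on S₀:
      (∀ x1 ≤ (0 : ℝ), ∀ x2 : ℝ, 0 ≤ x2 → x2 ≤ κ1 / Real.sqrt n →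
        F x1 x2 = 0) ∧
      -- on S₁ with x₂ ≤ κ₂/√n:
      (∀ x1 ≤ (0 : ℝ), ∀ x2 : ℝ, κ1 / Real.sqrt n ≤ x2 → x2 ≤ νs1 x1 →
        x2 ≤ κ2 / Real.sqrt n →
        F x1 x2 = ∫ t in (0 : ℝ)..Real.log (Real.sqrt n * x2 / κ1),
          phiSm (κ1 / Real.sqrt n) (κ2 / Real.sqrt n) (x2 * Real.exp (-t))) ∧
      -- on S₁ with x₂ ≥ κ₂/√n:
      (∀ x1 ≤ (0 : ℝ), ∀ x2 : ℝ, κ1 / Real.sqrt n ≤ x2 → x2 ≤ νs1 x1 →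
        κ2 / Real.sqrt n ≤ x2 →
        F x1 x2 = Real.log (Real.sqrt n * x2 / κ2) +
          ∫ t in (0 : ℝ)..Real.log (κ2 / κ1),
            phiSm (κ1 / Real.sqrt n) (κ2 / Real.sqrt n)
              (κ2 / Real.sqrt n * Real.exp (-t))) ∧
      -- on S₂ with x₂ ≤ κ₂/√n:
      (∀ x1 ≤ (0 : ℝ), ∀ x2 : ℝ, νs1 x1 ≤ x2 → x2 ≤ νs2 x1 →
        x2 ≤ κ2 / Real.sqrt n →
        F x1 x2 = (∫ t in (0 : ℝ)..tau x1 x2,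
            phiSm (κ1 / Real.sqrt n) (κ2 / Real.sqrt n) (x2 * Real.exp (-t))) +
          Real.sqrt n / β *
            ∫ t in (κ1 / Real.sqrt n)..(x2 * Real.exp (-tau x1 x2)),
              phiSm (κ1 / Real.sqrt n) (κ2 / Real.sqrt n) t) ∧
      -- on S₂ with x₂ ≥ κ₂/√n:
      (∀ x1 ≤ (0 : ℝ), ∀ x2 : ℝ, νs1 x1 ≤ x2 → x2 ≤ νs2 x1 →
        κ2 / Real.sqrt n ≤ x2 →
        F x1 x2 = Real.log (Real.sqrt n * x2 / κ2) +
          (∫ t in (Real.log (Real.sqrt n * x2 / κ2))..tau x1 x2,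
            phiSm (κ1 / Real.sqrt n) (κ2 / Real.sqrt n) (x2 * Real.exp (-t))) +
          Real.sqrt n / β *
            ∫ t in (κ1 / Real.sqrt n)..(x2 * Real.exp (-tau x1 x2)),
              phiSm (κ1 / Real.sqrt n) (κ2 / Real.sqrt n) t) ∧
      -- on S₃:
      (∀ x1 ≤ (0 : ℝ), ∀ x2 : ℝ, νs2 x1 ≤ x2 →
        F x1 x2 = tau x1 x2 +
          Real.sqrt n / β * (x2 * Real.exp (-tau x1 x2) - κ2 / Real.sqrt n) +
          Real.sqrt n / β *
            ∫ t in (κ1 / Real.sqrt n)..(κ2 / Real.sqrt n),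
              phiSm (κ1 / Real.sqrt n) (κ2 / Real.sqrt n) t) ∧
      -- F ∈ C²(Ω)
      ContDiffOn ℝ 2 (fun p : ℝ × ℝ => F p.1 p.2)
        (Set.Iic (0 : ℝ) ×ˢ Set.Ici (0 : ℝ)) ∧
      -- F1, F2 are the first-order (one-sided) partial derivatives of F on Ω
      (∀ x1 ≤ (0 : ℝ), ∀ x2 : ℝ, 0 ≤ x2 →
        HasDerivWithinAt (fun t => F t x2) (F1 x1 x2) (Set.Iic 0) x1 ∧
          HasDerivWithinAt (fun t => F x1 t) (F2 x1 x2) (Set.Ici 0) x2) ∧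
      -- formulas for F1
      (∀ x1 ≤ (0 : ℝ), ∀ x2 : ℝ, 0 ≤ x2 → x2 ≤ κ1 / Real.sqrt n →
        F1 x1 x2 = 0) ∧
      (∀ x1 ≤ (0 : ℝ), ∀ x2 : ℝ, κ1 / Real.sqrt n ≤ x2 → x2 ≤ νs1 x1 →
        F1 x1 x2 = 0) ∧
      (∀ x1 ≤ (0 : ℝ), ∀ x2 : ℝ, νs1 x1 ≤ x2 → x2 ≤ νs2 x1 →
        F1 x1 x2 = Real.sqrt n / β *
          phiSm (κ1 / Real.sqrt n) (κ2 / Real.sqrt n)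
            (x2 * Real.exp (-tau x1 x2)) * Real.exp (-tau x1 x2)) ∧
      (∀ x1 ≤ (0 : ℝ), ∀ x2 : ℝ, νs2 x1 ≤ x2 →
        F1 x1 x2 = Real.sqrt n / β * Real.exp (-tau x1 x2)) ∧
      -- formulas for F2
      (∀ x1 ≤ (0 : ℝ), ∀ x2 : ℝ, 0 ≤ x2 → x2 ≤ κ1 / Real.sqrt n →
        F2 x1 x2 = 0) ∧
      (∀ x1 ≤ (0 : ℝ), ∀ x2 : ℝ, κ1 / Real.sqrt n ≤ x2 → x2 ≤ νs1 x1 →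
        F2 x1 x2 = phiSm (κ1 / Real.sqrt n) (κ2 / Real.sqrt n) x2 / x2) ∧
      (∀ x1 ≤ (0 : ℝ), ∀ x2 : ℝ, νs1 x1 ≤ x2 → x2 ≤ νs2 x1 →
        F2 x1 x2 = 1 / x2 *
            (phiSm (κ1 / Real.sqrt n) (κ2 / Real.sqrt n) x2 -
              phiSm (κ1 / Real.sqrt n) (κ2 / Real.sqrt n)
                (x2 * Real.exp (-tau x1 x2))) +
          phiSm (κ1 / Real.sqrt n) (κ2 / Real.sqrt n)
              (x2 * Real.exp (-tau x1 x2)) *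
            (Real.sqrt n / β) * Real.exp (-tau x1 x2) * (tau x1 x2 + 1)) ∧
      (∀ x1 ≤ (0 : ℝ), ∀ x2 : ℝ, νs2 x1 ≤ x2 →
        F2 x1 x2 = Real.sqrt n / β * Real.exp (-tau x1 x2) * (tau x1 x2 + 1)) := by
  have hs : 0 < Real.sqrt n := Real.sqrt_pos.2 (by exact_mod_cast hn)
  have hbpos : 0 < β / Real.sqrt n := by positivity
  have hbl : β / Real.sqrt n < κ1 / Real.sqrt n := div_lt_div_of_pos_right hκ1 hs
  have hlu : κ1 / Real.sqrt n < κ2 / Real.sqrt n := div_lt_div_of_pos_right hκ12 hs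
  have hinv : Real.sqrt n / β = (β / Real.sqrt n)⁻¹ := (inv_div _ _).symm
  have hlog1 : ∀ x κ : ℝ, Real.sqrt n * x / κ = x / (κ / Real.sqrt n) := by
    intro x κ
    rw [div_div_eq_mul_div, mul_comm]
  have hlog2 : κ2 / κ1 = (κ2 / Real.sqrt n) / (κ1 / Real.sqrt n) := by
    field_simp
  have hG : ∀ κ x1 ν η : ℝ, GammaSol n β κ x1 ν η → 0 ≤ η ∧
      ν = κ / Real.sqrt n * Real.exp η ∧ β / Real.sqrt n * (Real.exp η - 1) - η * ν = x1 := by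
    rintro κ x1 ν η ⟨-, h0, h1, h2⟩
    have hE : Real.exp (-η) * Real.exp η = 1 := by rw [← Real.exp_add]; simp
    refine ⟨h0, ?_, ?_⟩
    · rw [← h2, mul_assoc, hE, mul_one]
    · have := congrArg (fun z => z * Real.exp η) h1
      linear_combination (-1) * this + (x1 + β / Real.sqrt n + η * ν) * hE
  have hH : ∀ x1 x2 η : ℝ, HitEq n β x1 x2 η ↔
      β / Real.sqrt n * (Real.exp η - 1) - η * x2 = x1 := by
    intro x1 x2 η
    have hE : Real.exp (-η) * Real.exp η = 1 := by rw [← Real.exp_add]; simp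
    unfold HitEq
    constructor
    · intro h
      have := congrArg (fun z => z * Real.exp η) h
      linear_combination this + (x1 + β / Real.sqrt n + η * x2) * hE
    · intro h
      linear_combination Real.exp (-η) * h - β / Real.sqrt n * hE
  have htau' : TauProp (β / Real.sqrt n) tau := by
    intro x1 x2 η h0 h1 h2
    exact htau x1 x2 η h0 ((hH _ _ _).2 h1) fun η' h0' h' => h2 η' h0' ((hH _ _ _).1 h')
  have hν1 : NuProp (β / Real.sqrt n) (κ1 / Real.sqrt n) νs1 := fun x1 hx1 =>
    (hνs1 x1 hx1).imp fun η h => hG _ _ _ _ h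
  have hν2 : NuProp (β / Real.sqrt n) (κ2 / Real.sqrt n) νs2 := fun x1 hx1 =>
    (hνs2 x1 hx1).imp fun η h => hG _ _ _ _ h
  simp only [hinv, hlog1, hlog2]
  clear hνs1 hνs2 htau hG hH hinv hlog1 hlog2
  generalize β / Real.sqrt n = b at *
  generalize κ1 / Real.sqrt n = l at *
  generalize κ2 / Real.sqrt n = u at *
  have hl0 : 0 < l := hbpos.trans hbl
  have hu0 : 0 < u := hl0.trans hlu
  have hg : ∀ y, b⁻¹ * ∫ t in l..y, phiSm l u t = b⁻¹ * PhiF l u y := fun _ => rfl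
  have hle : ∀ x1 ≤ (0 : ℝ), νs1 x1 ≤ νs2 x1 := fun x1 hx1 =>
    nu_le_nu hbpos hbl hlu htau' hν1 hν2 hx1
  have hlν : ∀ x1 ≤ (0 : ℝ), l ≤ νs1 x1 := fun x1 hx1 => nu_ge hl0 hν1 hx1
  have hS3 : ∀ x1 ≤ (0 : ℝ), ∀ x2 : ℝ, νs2 x1 ≤ x2 → u ≤ x2 * Real.exp (-tau x1 x2) ∧ u ≤ x2 :=
    fun x1 hx1 x2 hx => ⟨le_mul_exp_neg (tau_spec hbpos (hbl.trans hlu) htau' hν2 hx1 hx).2.2,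
      (nu_ge hu0 hν2 hx1).trans hx⟩
  refine ⟨FF b l u νs1 tau, FF1 b l u νs1 tau, FF2 b l u νs1 tau,
    ?_, ?_, ?_, ?_, ?_, ?_, FF_contDiffOn hbpos hbl hlu htau' hν1,
    fun x1 hx1 x2 hx2 => FF_hasDeriv hbpos hbl hlu htau' hν1 hx1 hx2, ?_, ?_, ?_, ?_, ?_, ?_, ?_, ?_⟩
  · intro x1 hx1 x2 _ hx
    rw [(FF_lo hbpos hbl htau' hν1 hx1 (hx.trans (hlν x1 hx1))).1, PsiF_lo _ _ _ hx]
  · intro x1 hx1 x2 hx hx' _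
    have hx0 := hl0.trans_le hx
    rw [(FF_lo hbpos hbl htau' hν1 hx1 hx').1, int_exp l u x2 _ _ hl0 hlu hx0,
      mul_exp_neg_log hx0 hl0, PsiF_lo _ _ l le_rfl]
    simp
  · intro x1 hx1 x2 hx hx' hxu
    have hx0 := hl0.trans_le hx
    rw [(FF_lo hbpos hbl htau' hν1 hx1 hx').1, int_exp l u u _ _ hl0 hlu hu0,
      mul_exp_neg_log hu0 hl0, PsiF_lo _ _ l le_rfl, PsiF_hi l u x2 hl0 hlu hxu]
    simp
    ring
  · intro x1 hx1 x2 hx _ _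
    have hx0 := hl0.trans_le ((hlν x1 hx1).trans hx)
    rw [int_exp l u x2 _ _ hl0 hlu hx0, hg]
    simp only [FF, if_pos hx, gF]
    simp
    ring
  · intro x1 hx1 x2 hx _ hxu
    have hx0 := hl0.trans_le ((hlν x1 hx1).trans hx)
    rw [int_exp l u x2 _ _ hl0 hlu hx0, hg, mul_exp_neg_log hx0 hu0]
    simp only [FF, if_pos hx, gF]
    rw [PsiF_hi l u x2 hl0 hlu hxu]
    ring
  · intro x1 hx1 x2 hx
    obtain ⟨h1, h2⟩ := hS3 x1 hx1 x2 hx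
    rw [hg]
    simp only [FF, if_pos ((hle x1 hx1).trans hx), gF]
    rw [PsiF_hi l u x2 hl0 hlu h2, PsiF_hi l u _ hl0 hlu h1, PhiF_hi l u _ hlu h1]
    have hx0 : 0 < x2 := hu0.trans_le h2
    have e : Real.log (x2 * Real.exp (-tau x1 x2) / u) = Real.log (x2 / u) - tau x1 x2 := by
      rw [mul_div_right_comm, Real.log_mul (by positivity) (Real.exp_pos _).ne', Real.log_exp]
      ring
    rw [e]
    ring
  · intro x1 hx1 x2 _ hx
    exact (FF_lo hbpos hbl htau' hν1 hx1 (hx.trans (hlν x1 hx1))).2.1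
  · intro x1 hx1 x2 _ hx
    exact (FF_lo hbpos hbl htau' hν1 hx1 hx).2.1
  · intro x1 hx1 x2 hx _
    unfold FF1; rw [if_pos hx]
  · intro x1 hx1 x2 hx
    simp only [FF1, if_pos ((hle x1 hx1).trans hx)]
    rw [phiSm_hi l u _ hlu (hS3 x1 hx1 x2 hx).1, mul_one]
  · intro x1 hx1 x2 _ hx
    rw [(FF_lo hbpos hbl htau' hν1 hx1 (hx.trans (hlν x1 hx1))).2.2, phiSm_lo _ _ _ hx, zero_div]
  · intro x1 hx1 x2 _ hx
    exact (FF_lo hbpos hbl htau' hν1 hx1 hx).2.2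
  · intro x1 hx1 x2 hx _
    unfold FF2; rw [if_pos hx]
  · intro x1 hx1 x2 hx
    simp only [FF2, if_pos ((hle x1 hx1).trans hx)]
    rw [phiSm_hi l u _ hlu (hS3 x1 hx1 x2 hx).1, phiSm_hi l u _ hlu (hS3 x1 hx1 x2 hx).2]
    ring
end

section
/- For every α > 0 and every κ_1, κ_2 with β < κ_1 < κ_2, there exists a function V : Ω → [1, ∞) of class C²(Ω), satisfying V_1(0, x_2) = V_2(0, x_2) for all x_2 ≥ 0 and V(x) → ∞ as |x| → ∞, such that G_Y V(x) ≤ −α·c·V(x) + α·d for all x ∈ Ω, where c = 1 − (12/(κ_2 − κ_1)²)·log((κ_2 − β)/(κ_1 − β)) − (1/(β(κ_1 − β)))·(1 + (κ_1/(κ_1 − β))·(4(κ_1 − β)/(κ_2 − κ_1))) − α·((4/(κ_2 − κ_1))·log((κ_2 − β)/(κ_1 − β)) + 1/β)² and d = (((κ_2 − β)/(κ_1 − β))·(κ_2/κ_1))^α · e^{α(κ_2 − κ_1)/β}. -/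
theorem aux_cmp {F G f g : ℝ → ℝ} {a b : ℝ} (hab : a ≤ b)
    (hF : ∀ x ∈ Set.Icc a b, HasDerivAt F (f x) x)
    (hG : ∀ x ∈ Set.Icc a b, HasDerivAt G (g x) x)
    (h : ∀ x ∈ Set.Icc a b, f x ≤ g x) : F b - F a ≤ G b - G a := by
  have hd : ∀ x ∈ Set.Icc a b, HasDerivAt (fun x => G x - F x) (g x - f x) x :=
    fun x hx => (hG x hx).sub (hF x hx)
  have hm : MonotoneOn (fun x => G x - F x) (Set.Icc a b) := by
    apply monotoneOn_of_deriv_nonneg (convex_Icc a b)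
    · exact fun x hx => (hd x hx).continuousAt.continuousWithinAt
    · exact fun x hx => (hd x (interior_subset hx)).differentiableAt.differentiableWithinAt
    · intro x hx
      rw [(hd x (interior_subset hx)).deriv]
      linarith [h x (interior_subset hx)]
  have := hm (Set.left_mem_Icc.2 hab) (Set.right_mem_Icc.2 hab) hab
  simp only at this
  linarith

theorem aux_prim (f : ℝ → ℝ) (hf : Continuous f) (a : ℝ) :
    ∃ F : ℝ → ℝ, F a = 0 ∧ ∀ x, HasDerivAt F (f x) x := by
  refine ⟨fun x => ∫ t in a..x, f t, by simp, fun x => ?_⟩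
  exact intervalIntegral.integral_hasDerivAt_right (hf.intervalIntegrable _ _)
    (hf.stronglyMeasurableAtFilter _ _) hf.continuousAt

theorem aux_mono {F f : ℝ → ℝ} (hF : ∀ x, HasDerivAt F (f x) x) (h : ∀ x, 0 ≤ f x) :
    Monotone F := by
  intro a b hab
  have := aux_cmp (F := fun _ => (0 : ℝ)) (f := fun _ => 0) hab
    (fun x _ => hasDerivAt_const x (0 : ℝ)) (fun x _ => hF x) (fun x _ => h x)
  linarith

theorem aux_C1 {F f : ℝ → ℝ} (hF : ∀ x, HasDerivAt F (f x) x) (hf : Continuous f) :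
    ContDiff ℝ 1 F := by
  rw [contDiff_one_iff_deriv]
  refine ⟨fun x => (hF x).differentiableAt, ?_⟩
  rwa [funext fun x => (hF x).deriv]

theorem aux_C2 {F f : ℝ → ℝ} (hF : ∀ x, HasDerivAt F (f x) x) (hf : ContDiff ℝ 1 f) :
    ContDiff ℝ 2 F := by
  have : (2 : WithTop ℕ∞) = 1 + 1 := by norm_num
  rw [this, contDiff_succ_iff_deriv]
  refine ⟨fun x => (hF x).differentiableAt, by simp, ?_⟩
  rwa [funext fun x => (hF x).deriv]

/-- smooth cut-off -/
theorem aux_phi (a b : ℝ) (hab : a < b) : ∃ φ ψ : ℝ → ℝ, Continuous ψ ∧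
    (∀ x, HasDerivAt φ (ψ x) x) ∧ (∀ x ≤ a, φ x = 0) ∧ (∀ x, b ≤ x → φ x = 1) ∧
    (∀ x, 0 ≤ φ x) ∧ (∀ x, φ x ≤ 1) ∧ (∀ x, 0 ≤ ψ x) ∧ (∀ x, ψ x ≤ 4 / (b - a)) ∧
    (∀ x ≤ a, ψ x = 0) := by
  have hd : 0 < b - a := by linarith
  let ψ : ℝ → ℝ := fun x => 6 / (b - a) ^ 3 * max 0 ((x - a) * (b - x))
  have hψ : ψ = fun x => 6 / (b - a) ^ 3 * max 0 ((x - a) * (b - x)) := rfl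
  have hc : Continuous ψ := by rw [hψ]; fun_prop
  have hψ0 : ∀ x, 0 ≤ ψ x := fun x => by rw [hψ]; positivity
  have hψl : ∀ x ≤ a, ψ x = 0 := fun x hx => by
    rw [hψ]; simp only
    rw [max_eq_left (mul_nonpos_of_nonpos_of_nonneg (by linarith) (by linarith)), mul_zero]
  have hψr : ∀ x, b ≤ x → ψ x = 0 := fun x hx => by
    rw [hψ]; simp only
    rw [max_eq_left (mul_nonpos_of_nonneg_of_nonpos (by linarith) (by linarith)), mul_zero]
  obtain ⟨φ, hφa, hφ⟩ := aux_prim ψ hc a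
  have hmono := aux_mono hφ hψ0
  have hb : φ b = 1 := by
    have hp : ∀ x, HasDerivAt (fun x => ((x - a) / (b - a)) ^ 2 * (3 - 2 * ((x - a) / (b - a))))
        (6 / (b - a) ^ 3 * ((x - a) * (b - x))) x := by
      intro x
      have h1 : HasDerivAt (fun x => (x - a) / (b - a)) (1 / (b - a)) x :=
        ((hasDerivAt_id x).sub_const a).div_const _
      refine ((h1.pow 2).mul ((h1.const_mul 2).const_sub 3)).congr_deriv ?_
      have hd' := hd.ne'
      have e : b - x = (b - a) - (x - a) := by ring
      simp only [Pi.pow_apply]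
      rw [e]
      generalize b - a = D at *
      generalize x - a = y at *
      norm_num
      field_simp
      ring
    have he : ∀ x ∈ Set.Icc a b, ψ x = 6 / (b - a) ^ 3 * ((x - a) * (b - x)) := fun x hx => by
      rw [hψ]; simp only
      rw [max_eq_right (mul_nonneg (by linarith [hx.1]) (by linarith [hx.2]))]
    have h1 := aux_cmp hab.le (fun x _ => hφ x) (fun x _ => hp x) (fun x hx => (he x hx).le)
    have h2 := aux_cmp hab.le (fun x _ => hp x) (fun x _ => hφ x) (fun x hx => (he x hx).ge)
    simp only [hφa, sub_self, zero_div, div_self hd.ne'] at h1 h2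
    norm_num at h1 h2
    linarith
  have hr : ∀ x, b ≤ x → φ x = 1 := fun x hx => by
    have h1 := aux_cmp (G := fun _ => (0 : ℝ)) (g := fun _ => 0) hx
      (fun y _ => hφ y) (fun y _ => hasDerivAt_const y (0 : ℝ)) (fun y hy => (hψr y hy.1).le)
    have := hmono hx
    linarith
  have hl : ∀ x ≤ a, φ x = 0 := fun x hx => by
    have h1 := aux_cmp (G := fun _ => (0 : ℝ)) (g := fun _ => 0) hx
      (fun y _ => hφ y) (fun y _ => hasDerivAt_const y (0 : ℝ)) (fun y hy => (hψl y hy.2).le)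
    have := hmono hx
    linarith
  refine ⟨φ, ψ, hc, hφ, hl, hr, ?_, ?_, hψ0, ?_, hψl⟩
  · intro x
    rcases le_total x a with h | h
    · rw [hl x h]
    · rw [← hφa]; exact hmono h
  · intro x
    rcases le_total x b with h | h
    · rw [← hb]; exact hmono h
    · rw [hr x h]
  · intro x
    have : max 0 ((x - a) * (b - x)) ≤ (b - a) ^ 2 / 4 := by
      apply max_le
      · positivity
      · nlinarith [sq_nonneg (x - a - (b - x))]
    calc ψ x ≤ 6 / (b - a) ^ 3 * ((b - a) ^ 2 / 4) := by rw [hψ]; simp only; gcongr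
      _ = (3 / 2) / (b - a) := by field_simp; norm_num
      _ ≤ _ := by gcongr; norm_num

/-- inverse of `log z + β / z` on `[κ, ∞)` -/
theorem aux_Z (β κ : ℝ) (hβ : 0 < β) (hκ : β < κ) : ∃ Z : ℝ → ℝ, StrictMono Z ∧
    Continuous Z ∧ (∀ z, κ ≤ z → Z (Real.log z + β / z) = z) ∧
    (∀ t, HasDerivAt Z ((max (Z t) κ) ^ 2 / (max (Z t) κ - β)) t) := by
  have hκ0 : 0 < κ := by linarith
  have hm0 : ∀ z, 0 < max z κ := fun z => lt_of_lt_of_le hκ0 (le_max_right _ _)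
  have hmb : ∀ z, 0 < max z κ - β := fun z => by linarith [le_max_right z κ]
  have hc : Continuous fun z => (max z κ - β) / (max z κ) ^ 2 := by
    apply Continuous.div (by fun_prop) (by fun_prop)
    intro z; exact (pow_pos (hm0 z) 2).ne'
  obtain ⟨T0, hT0, hT0d⟩ := aux_prim _ hc κ
  let T : ℝ → ℝ := fun z => T0 z + (Real.log κ + β / κ)
  have hTd : ∀ z, HasDerivAt T ((max z κ - β) / (max z κ) ^ 2) z := fun z => (hT0d z).add_const _
  have hTpos : ∀ z, 0 < (max z κ - β) / (max z κ) ^ 2 := fun z =>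
    div_pos (hmb z) (pow_pos (hm0 z) 2)
  have hTm : StrictMono T := strictMono_of_deriv_pos fun z => by
    rw [(hTd z).deriv]; exact hTpos z
  have hTc : Continuous T := continuous_iff_continuousAt.2 fun z => (hTd z).continuousAt
  have hTκ : T κ = Real.log κ + β / κ := by simp [T, hT0]
  have hlog : ∀ z, κ ≤ z → HasDerivAt (fun z => Real.log z + β / z)
      ((max z κ - β) / (max z κ) ^ 2) z := by
    intro z hz
    have hz0 : z ≠ 0 := by linarith
    rw [max_eq_left hz]
    refine ((Real.hasDerivAt_log hz0).add ((hasDerivAt_const z β).div (hasDerivAt_id z) hz0)).congr_deriv ?_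
    simp only [id]
    field_simp
    ring
  have hTe : ∀ z, κ ≤ z → T z = Real.log z + β / z := by
    intro z hz
    have h1 := aux_cmp hz (fun y _ => hTd y) (fun y hy => hlog y hy.1) (fun y _ => le_rfl)
    have h2 := aux_cmp hz (fun y hy => hlog y hy.1) (fun y _ => hTd y) (fun y _ => le_rfl)
    rw [hTκ] at h1 h2
    linarith
  have htop : Filter.Tendsto T Filter.atTop Filter.atTop := by
    apply Filter.tendsto_atTop_mono' _ _ Real.tendsto_log_atTop
    filter_upwards [Filter.eventually_ge_atTop κ] with z hz
    rw [hTe z hz]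
    have : 0 < β / z := div_pos hβ (by linarith)
    linarith
  have hk : 0 < (κ - β) / κ ^ 2 := by have := hTpos κ; rwa [max_self] at this
  have hbot : Filter.Tendsto T Filter.atBot Filter.atBot := by
    have h1 : Filter.Tendsto (fun z : ℝ => (κ - β) / κ ^ 2 * z + (T κ - (κ - β) / κ ^ 2 * κ))
        Filter.atBot Filter.atBot :=
      Filter.tendsto_atBot_add_const_right _ _ (Filter.tendsto_id.const_mul_atBot hk)
    apply Filter.tendsto_atBot_mono' _ _ h1
    filter_upwards [Filter.eventually_le_atBot κ] with z hz
    have h2 := aux_cmp (F := fun z => (κ - β) / κ ^ 2 * z) (f := fun _ => (κ - β) / κ ^ 2) hz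
      (fun y _ => by simpa using (hasDerivAt_id y).const_mul ((κ - β) / κ ^ 2))
      (fun y _ => hTd y) (fun y hy => by rw [max_eq_right hy.2])
    linarith
  have hsurj := hTc.surjective htop hbot
  let e := hTm.orderIsoOfSurjective T hsurj
  have hel : ∀ z, e.symm (T z) = z := fun z => e.symm_apply_apply z
  have her : ∀ t, T (e.symm t) = t := fun t => e.apply_symm_apply t
  have hec : Continuous e.symm := e.symm.continuous
  refine ⟨e.symm, e.symm.strictMono, hec, ?_, ?_⟩
  · intro z hz
    rw [← hTe z hz, hel]
  · intro t
    have := HasDerivAt.of_local_left_inverse (f := T) (g := e.symm) hec.continuousAt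
      (hTd (e.symm t)) (hTpos _).ne' (Filter.Eventually.of_forall her)
    rwa [inv_div] at this

theorem aux_pieces (β κ1 κ2 : ℝ) (hβ : 0 < β) (hκ1 : β < κ1) (hκ12 : κ1 < κ2) :
    ∃ φ ψ g P q ρ ρ' : ℝ → ℝ,
      (Continuous ψ ∧ (∀ x, HasDerivAt φ (ψ x) x) ∧ (∀ x ≤ κ1, φ x = 0) ∧
        (∀ x, κ2 ≤ x → φ x = 1) ∧ (∀ x, 0 ≤ φ x) ∧ (∀ x, φ x ≤ 1) ∧
        (∀ x, ψ x ≤ 4 / (κ2 - κ1))) ∧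
      ((∀ x, HasDerivAt g (φ x) x) ∧ (∀ x, 0 ≤ g x) ∧ (∀ x ≤ κ2, g x ≤ κ2 - κ1) ∧
        (∀ x, κ2 ≤ x → x - κ2 ≤ g x)) ∧
      ((∀ x, HasDerivAt P (φ x / x) x) ∧ (∀ x, 0 ≤ P x) ∧ (∀ x ≤ κ1, P x = 0) ∧
        (∀ x, κ2 ≤ x → Real.log x - Real.log κ2 ≤ P x)) ∧
      ((∀ x, HasDerivAt q (ρ x) x) ∧ (∀ x, HasDerivAt ρ (ρ' x) x) ∧ Continuous ρ' ∧
        Monotone q ∧ Monotone ρ ∧ (∀ t, 0 ≤ q t) ∧ (∀ t, 0 ≤ ρ t) ∧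
        (∀ t ≤ Real.log κ1 + β / κ1, q t = 0) ∧
        (∀ z, κ1 ≤ z → ρ (Real.log z + β / z) = φ z * z / β) ∧
        (∀ z, κ1 ≤ z → z ≤ κ2 → P z + q (Real.log z + β / z) ≤ (κ2 - κ1) / β) ∧
        (∀ z, κ1 ≤ z → ∀ t ≤ Real.log z + β / z,
          ρ' t / z ^ 2 ≤ 1 / (β * (κ1 - β)) *
              (1 + κ1 / (κ1 - β) * (4 * (κ1 - β) / (κ2 - κ1))))) := by
  obtain ⟨φ, ψ, hψc, hφ, hφl, hφr, hφ0, hφ1, hψ0, hψ4, hψl⟩ := aux_phi κ1 κ2 hκ12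
  obtain ⟨Z, hZm, hZc, hZe, hZd⟩ := aux_Z β κ1 hβ hκ1
  have hκ10 : 0 < κ1 := by linarith
  have hδ : 0 < κ2 - κ1 := by linarith
  have hφc : Continuous φ := continuous_iff_continuousAt.2 fun z => (hφ z).continuousAt
  have hm0 : ∀ z, 0 < max z κ1 := fun z => lt_of_lt_of_le hκ10 (le_max_right _ _)
  have hmb : ∀ z, 0 < max z κ1 - β := fun z => by linarith [le_max_right z κ1]
  have hφm : ∀ z, φ z / max z κ1 = φ z / z := by
    intro z
    rcases le_total z κ1 with h | h
    · rw [hφl z h]; simp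
    · rw [max_eq_left h]
  have hφz : ∀ z, φ z * max z κ1 = φ z * z := by
    intro z
    rcases le_total z κ1 with h | h
    · rw [hφl z h]; simp
    · rw [max_eq_left h]
  obtain ⟨g, hg0, hg⟩ := aux_prim φ hφc κ1
  have hgm := aux_mono hg hφ0
  obtain ⟨P, hP0, hP⟩ := aux_prim (fun z => φ z / max z κ1)
    (hφc.div (by fun_prop) (fun z => (hm0 z).ne')) κ1
  have hPm := aux_mono hP (fun z => div_nonneg (hφ0 z) (hm0 z).le)
  obtain ⟨Q, hQ0, hQ⟩ := aux_prim (fun z => φ z * (1 / β - 1 / max z κ1))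
    (hφc.mul (continuous_const.sub (continuous_const.div (by fun_prop) (fun z => (hm0 z).ne')))) κ1
  have hQm := aux_mono hQ (fun z => mul_nonneg (hφ0 z) (by
    rw [sub_nonneg]
    exact one_div_le_one_div_of_le hβ (by linarith [hmb z])))
  have hlow : ∀ F f : ℝ → ℝ, F κ1 = 0 → Monotone F → (∀ x, HasDerivAt F (f x) x) →
      (∀ x ≤ κ1, f x ≤ 0) → ∀ x ≤ κ1, F x = 0 := by
    intro F f h0 hm hd hf x hx
    have h1 := aux_cmp (G := fun _ => (0 : ℝ)) (g := fun _ => 0) hx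
      (fun y _ => hd y) (fun y _ => hasDerivAt_const y (0 : ℝ)) (fun y hy => hf y hy.2)
    have := hm hx
    linarith
  have hnn : ∀ F : ℝ → ℝ, Monotone F → (∀ x ≤ κ1, F x = 0) → ∀ x, 0 ≤ F x := by
    intro F hm h0 x
    rcases le_total x κ1 with h | h
    · rw [h0 x h]
    · rw [← h0 κ1 le_rfl]; exact hm h
  have hgl := hlow g _ hg0 hgm hg (fun x hx => (hφl x hx).le)
  have hPl := hlow P _ hP0 hPm hP (fun x hx => by rw [hφl x hx]; simp)
  have hQl := hlow Q _ hQ0 hQm hQ (fun x hx => by rw [hφl x hx]; simp)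
  have hgn := hnn g hgm hgl
  have hPn := hnn P hPm hPl
  have hQn := hnn Q hQm hQl
  have hZκ : ∀ t ≤ Real.log κ1 + β / κ1, Z t ≤ κ1 := fun t ht => by
    have := hZm.monotone ht
    rwa [hZe κ1 le_rfl] at this
  have hρ : ∀ t, HasDerivAt (fun t => φ (Z t) * Z t / β)
      ((ψ (Z t) * Z t + φ (Z t)) / β * ((max (Z t) κ1) ^ 2 / (max (Z t) κ1 - β))) t := by
    intro t
    refine ((((hφ (Z t)).comp t (hZd t)).mul (hZd t)).div_const β).congr_deriv ?_
    simp only [Function.comp]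
    ring
  have hψZ : ∀ z, 0 ≤ ψ z * z := fun z => by
    rcases le_total z κ1 with h | h
    · rw [hψl z h]; simp
    · exact mul_nonneg (hψ0 z) (by linarith)
  have hρ0 : ∀ t, 0 ≤ (ψ (Z t) * Z t + φ (Z t)) / β *
      ((max (Z t) κ1) ^ 2 / (max (Z t) κ1 - β)) := fun t =>
    mul_nonneg (div_nonneg (add_nonneg (hψZ _) (hφ0 _)) hβ.le)
      (div_nonneg (sq_nonneg _) (hmb _).le)
  have hqm : Monotone (fun t => Q (Z t)) := hQm.comp hZm.monotone
  refine ⟨φ, ψ, g, P, fun t => Q (Z t), fun t => φ (Z t) * Z t / β,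
    fun t => (ψ (Z t) * Z t + φ (Z t)) / β * ((max (Z t) κ1) ^ 2 / (max (Z t) κ1 - β)),
    ⟨hψc, hφ, hφl, hφr, hφ0, hφ1, hψ4⟩, ⟨hg, hgn, ?_, ?_⟩, ⟨?_, hPn, hPl, ?_⟩,
    ⟨?_, hρ, ?_, hqm, aux_mono hρ hρ0, fun t => hQn _, ?_, ?_, ?_, ?_, ?_⟩⟩
  · intro x hx
    have h1 := aux_cmp (G := fun x => x) (g := fun _ => 1) hκ12.le (fun y _ => hg y)
      (fun y _ => hasDerivAt_id y) (fun y _ => hφ1 y)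
    have := hgm hx
    linarith
  · intro x hx
    have h1 := aux_cmp (F := fun x => x) (f := fun _ => 1) hx
      (fun y _ => hasDerivAt_id y) (fun y _ => hg y) (fun y hy => (hφr y hy.1).ge)
    have := hgn κ2
    linarith
  · intro x
    have := hP x
    rwa [hφm] at this
  · intro x hx
    have h1 := aux_cmp (F := Real.log) (f := fun x => x⁻¹) hx
      (fun y hy => Real.hasDerivAt_log (by linarith [hy.1])) (fun y _ => hP y)
      (fun y hy => by rw [hφm, hφr y hy.1, one_div])
    have := hPn κ2
    linarith
  · intro t
    refine ((hQ (Z t)).comp t (hZd t)).congr_deriv ?_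
    simp only
    rw [← hφz]
    have h1 := (hm0 (Z t)).ne'
    have h2 := (hmb (Z t)).ne'
    field_simp
  · refine Continuous.mul ?_ (Continuous.div (by fun_prop) (by fun_prop) (fun z => (hmb _).ne'))
    fun_prop
  · intro t
    simp only
    rw [← hφz]
    exact div_nonneg (mul_nonneg (hφ0 _) (hm0 _).le) hβ.le
  · intro t ht
    exact hQl _ (hZκ t ht)
  · intro z hz
    simp only [hZe z hz]
  · intro z hz hz2
    simp only [hZe z hz]
    have h1 := aux_cmp (F := fun x => P x + Q x) (G := fun x => x / β) (g := fun _ => 1 / β) hz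
      (fun y _ => (hP y).add (hQ y)) (fun y _ => (hasDerivAt_id y).div_const β)
      (fun y hy => by
        have h3 := (hm0 y).ne'
        calc φ y / max y κ1 + φ y * (1 / β - 1 / max y κ1) = φ y * (1 / β) := by ring
          _ ≤ 1 * (1 / β) := by gcongr; exact hφ1 y
          _ = 1 / β := one_mul _)
    simp only [hP0, hQ0] at h1
    have : z / β - κ1 / β ≤ (κ2 - κ1) / β := by rw [← sub_div]; gcongr
    linarith
  · intro z hz t ht
    have hZz : Z t ≤ z := by
      have := hZm.monotone ht
      rwa [hZe z hz] at this
    have hz0 : 0 < z := by linarith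
    have hkb : 0 < κ1 - β := by linarith
    rcases le_total (Z t) κ1 with h | h
    · simp only [hφl _ h, hψl _ h]
      simp only [zero_mul, add_zero, zero_div]
      positivity
    · simp only [max_eq_left h]
      have hw0 : 0 < Z t := by linarith
      have hwb : 0 < Z t - β := by linarith
      generalize Z t = w at *
      have e1 : (ψ w * w + φ w) / β * (w ^ 2 / (w - β)) / z ^ 2 =
        (1 / β) * (ψ w * (w / (w - β)) + φ w * (1 / (w - β))) * (w / z) ^ 2 := by
        field_simp
      have e2 : 1 / (β * (κ1 - β)) * (1 + κ1 / (κ1 - β) * (4 * (κ1 - β) / (κ2 - κ1))) =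
        (1 / β) * (4 / (κ2 - κ1) * (κ1 / (κ1 - β)) + 1 * (1 / (κ1 - β))) := by
        field_simp
        ring
      rw [e1, e2]
      have i1 : (w / z) ^ 2 ≤ 1 := by
        apply pow_le_one₀ (by positivity)
        rw [div_le_one hz0]; exact hZz
      have i2 : w / (w - β) ≤ κ1 / (κ1 - β) := by
        rw [div_le_div_iff₀ hwb hkb]; nlinarith
      have i3 : 1 / (w - β) ≤ 1 / (κ1 - β) := one_div_le_one_div_of_le hkb (by linarith)
      have j1 := hψ0 w
      have j2 := hφ0 w
      calc _ ≤ (1 / β) * (ψ w * (w / (w - β)) + φ w * (1 / (w - β))) * 1 := by gcongr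
        _ ≤ _ := by
          rw [mul_one]
          have := hψ4 w
          have := hφ1 w
          gcongr

theorem aux_theta_mono (β κ z : ℝ) (hβ : 0 < β) (h1 : β ≤ z) (h2 : z ≤ κ) :
    Real.log z + β / z ≤ Real.log κ + β / κ := by
  have hlog : ∀ y ∈ Set.Icc z κ, HasDerivAt (fun z => Real.log z + β / z)
      ((y - β) / y ^ 2) y := by
    intro y hy
    have hz0 : y ≠ 0 := by linarith [hy.1]
    refine ((Real.hasDerivAt_log hz0).add
      ((hasDerivAt_const y β).div (hasDerivAt_id y) hz0)).congr_deriv ?_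
    simp only [id]
    field_simp
    ring
  have := aux_cmp (F := fun _ => (0 : ℝ)) (f := fun _ => 0) h2
    (fun x _ => hasDerivAt_const x (0 : ℝ)) hlog
    (fun y hy => div_nonneg (by linarith [hy.1]) (sq_nonneg _))
  linarith

theorem aux_H (β κ1 κ2 B : ℝ) (hβ : 0 < β) (hκ1 : β < κ1) (hκ12 : κ1 < κ2) (hB : 0 ≤ B)
    (φ P q ρ ρ' : ℝ → ℝ) (hφl : ∀ x ≤ κ1, φ x = 0) (hφ1 : ∀ x, φ x ≤ 1)
    (hPl : ∀ x ≤ κ1, P x = 0)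
    (hq : ∀ x, HasDerivAt q (ρ x) x) (hρ : ∀ x, HasDerivAt ρ (ρ' x) x) (hρc : Continuous ρ')
    (hqm : Monotone q) (hρm : Monotone ρ) (hq0 : ∀ t, 0 ≤ q t) (hρ0 : ∀ t, 0 ≤ ρ t)
    (hql : ∀ t ≤ Real.log κ1 + β / κ1, q t = 0)
    (hρe : ∀ z, κ1 ≤ z → ρ (Real.log z + β / z) = φ z * z / β)
    (hPq : ∀ z, κ1 ≤ z → z ≤ κ2 → P z + q (Real.log z + β / z) ≤ (κ2 - κ1) / β)
    (hρB : ∀ z, κ1 ≤ z → ∀ t ≤ Real.log z + β / z, ρ' t / z ^ 2 ≤ B) :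
    ∃ H H1 H2 H11 : ℝ → ℝ → ℝ,
      (∀ x1 x2, 0 ≤ H x1 x2) ∧
      ContDiffOn ℝ 2 (fun p : ℝ × ℝ => H p.1 p.2) (Set.Iic (0 : ℝ) ×ˢ Set.Ici (0 : ℝ)) ∧
      (∀ x1 x2, HasDerivAt (fun t => H t x2) (H1 x1 x2) x1) ∧
      (∀ x1 x2, HasDerivAt (fun t => H1 t x2) (H11 x1 x2) x1) ∧
      (∀ x1 ≤ (0 : ℝ), ∀ x2, HasDerivAt (fun t => H x1 t) (H2 x1 x2) x2) ∧
      (∀ x2, H1 0 x2 = H2 0 x2 + φ x2 / x2) ∧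
      (∀ x1 x2, (-x1 + x2 - β) * H1 x1 x2 - x2 * H2 x1 x2 = 0) ∧
      (∀ x1 x2, 0 ≤ H1 x1 x2) ∧ (∀ x1 ≤ (0 : ℝ), ∀ x2, H1 x1 x2 ≤ 1 / β) ∧
      (∀ x1 ≤ (0 : ℝ), ∀ x2, H11 x1 x2 ≤ B) ∧
      (∀ x1 ≤ (0 : ℝ), ∀ x2 ≤ κ2, P x2 + H x1 x2 ≤ (κ2 - κ1) / β) := by
  have hκ0 : 0 < κ1 := by linarith
  let θ : ℝ → ℝ → ℝ := fun x1 x2 => Real.log x2 + (x1 + β) / x2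
  have hθ0 : ∀ x2, θ 0 x2 = Real.log x2 + β / x2 := fun x2 => by simp [θ]
  have hθle : ∀ x1 ≤ (0 : ℝ), ∀ x2, 0 < x2 → θ x1 x2 ≤ Real.log x2 + β / x2 := by
    intro x1 hx1 x2 hx2
    have : (x1 + β) / x2 ≤ β / x2 := by gcongr; linarith
    simp only [θ]
    linarith
  have hθκ : ∀ x1 ≤ (0 : ℝ), ∀ x2, β < x2 → x2 ≤ κ1 → θ x1 x2 ≤ Real.log κ1 + β / κ1 :=
    fun x1 hx1 x2 h2 h3 => (hθle x1 hx1 x2 (by linarith)).trans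
      (aux_theta_mono β κ1 x2 hβ h2.le h3)
  have hρl : ∀ t ≤ Real.log κ1 + β / κ1, ρ t = 0 := fun t ht => by
    have := hρm ht
    rw [hρe κ1 le_rfl, hφl κ1 le_rfl] at this
    simp at this
    exact le_antisymm this (hρ0 t)
  have hθ1 : ∀ x1 x2, HasDerivAt (fun t => θ t x2) (1 / x2) x1 := fun x1 x2 =>
    ((((hasDerivAt_id x1).add_const β).div_const x2).const_add _)
  have hθ2 : ∀ x1 x2, x2 ≠ 0 →
      HasDerivAt (fun t => θ x1 t) (1 / x2 - (x1 + β) / x2 ^ 2) x2 := by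
    intro x1 x2 hx2
    refine ((Real.hasDerivAt_log hx2).add
      ((hasDerivAt_const x2 (x1 + β)).div (hasDerivAt_id x2) hx2)).congr_deriv ?_
    simp only [id]
    field_simp
    ring
  let H : ℝ → ℝ → ℝ := fun x1 x2 => if x2 ≤ κ1 then 0 else q (θ x1 x2)
  have hHe : ∀ x1 ≤ (0 : ℝ), ∀ x2, β < x2 → H x1 x2 = q (θ x1 x2) := by
    intro x1 hx1 x2 hx2
    simp only [H]
    split_ifs with h
    · rw [hql _ (hθκ x1 hx1 x2 hx2 h)]
    · rfl
  have hq2 : ContDiff ℝ 2 q := aux_C2 hq (aux_C1 hρ hρc)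
  refine ⟨H, fun x1 x2 => if x2 ≤ κ1 then 0 else ρ (θ x1 x2) * (1 / x2),
    fun x1 x2 => if x2 ≤ κ1 then 0 else ρ (θ x1 x2) * (1 / x2 - (x1 + β) / x2 ^ 2),
    fun x1 x2 => if x2 ≤ κ1 then 0 else ρ' (θ x1 x2) * (1 / x2) * (1 / x2),
    ?_, ?_, ?_, ?_, ?_, ?_, ?_, ?_, ?_, ?_, ?_⟩
  · intro x1 x2
    simp only [H]
    split_ifs
    · exact le_rfl
    · exact hq0 _
  · rintro ⟨x1, x2⟩ ⟨hx1, hx2⟩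
    simp only [Set.mem_Iic, Set.mem_Ici] at hx1 hx2
    rcases lt_or_ge x2 κ1 with h | h
    · have : ContDiffWithinAt ℝ 2 (fun _ : ℝ × ℝ => (0 : ℝ))
        (Set.Iic (0 : ℝ) ×ˢ Set.Ici (0 : ℝ)) (x1, x2) := contDiffWithinAt_const
      refine this.congr_of_eventuallyEq ?_ ?_
      · apply mem_nhdsWithin_of_mem_nhds
        have : ∀ᶠ p : ℝ × ℝ in nhds (x1, x2), p.2 < κ1 :=
          continuousAt_snd.eventually (gt_mem_nhds h)
        filter_upwards [this] with p hp
        simp only [H, if_pos hp.le]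
      · simp only [H, if_pos h.le]
    · have h0 : x2 ≠ 0 := by linarith
      have : ContDiffWithinAt ℝ 2 (fun p : ℝ × ℝ => q (θ p.1 p.2))
          (Set.Iic (0 : ℝ) ×ˢ Set.Ici (0 : ℝ)) (x1, x2) := by
        apply ContDiffAt.contDiffWithinAt
        apply hq2.contDiffAt.comp
        exact (contDiffAt_snd.log h0).add
          ((contDiffAt_fst.add contDiffAt_const).div contDiffAt_snd h0)
      refine this.congr_of_eventuallyEq ?_ ?_
      · have : ∀ᶠ p : ℝ × ℝ in nhds (x1, x2), β < p.2 :=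
          continuousAt_snd.eventually (lt_mem_nhds (by linarith))
        filter_upwards [mem_nhdsWithin_of_mem_nhds this, self_mem_nhdsWithin] with p hp hp2
        exact hHe _ hp2.1 _ hp
      · exact hHe _ hx1 _ (by linarith)
  · intro x1 x2
    by_cases h : x2 ≤ κ1
    · simp only [H, if_pos h]
      exact hasDerivAt_const _ _
    · simp only [H, if_neg h]
      exact (hq _).comp x1 (hθ1 x1 x2)
  · intro x1 x2
    by_cases h : x2 ≤ κ1
    · simp only [if_pos h]
      exact hasDerivAt_const _ _
    · simp only [if_neg h]
      exact ((hρ _).comp x1 (hθ1 x1 x2)).mul_const _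
  · intro x1 hx1 x2
    rcases lt_or_ge x2 κ1 with h | h
    · simp only [if_pos h.le]
      refine (hasDerivAt_const x2 (0 : ℝ)).congr_of_eventuallyEq ?_
      filter_upwards [gt_mem_nhds h] with t ht
      simp only [H, if_pos ht.le]
    · have h0 : x2 ≠ 0 := by linarith
      have h3 : HasDerivAt (fun t => q (θ x1 t))
        (ρ (θ x1 x2) * (1 / x2 - (x1 + β) / x2 ^ 2)) x2 := (hq _).comp x2 (hθ2 x1 x2 h0)
      have h4 : HasDerivAt (fun t => H x1 t)
        (ρ (θ x1 x2) * (1 / x2 - (x1 + β) / x2 ^ 2)) x2 := by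
        refine h3.congr_of_eventuallyEq ?_
        filter_upwards [lt_mem_nhds (show β < x2 by linarith)] with t ht
        exact hHe _ hx1 _ ht
      convert h4 using 1
      simp only
      split_ifs with h5
      · rw [hρl _ (hθκ x1 hx1 x2 (by linarith) h5), zero_mul]
      · rfl
  · intro x2
    simp only
    split_ifs with h
    · rw [hφl _ h]; simp
    · push Not at h
      have h0 : x2 ≠ 0 := by linarith
      rw [hθ0, hρe _ h.le]
      field_simp
      ring
  · intro x1 x2
    simp only
    split_ifs with h
    · simp
    · push Not at h
      have h0 : x2 ≠ 0 := by linarith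
      field_simp
      ring
  · intro x1 x2
    simp only
    split_ifs with h
    · exact le_rfl
    · push Not at h
      have h0 : 0 < x2 := by linarith
      exact mul_nonneg (hρ0 _) (by positivity)
  · intro x1 hx1 x2
    simp only
    split_ifs with h
    · positivity
    · push Not at h
      have h0 : 0 < x2 := by linarith
      calc ρ (θ x1 x2) * (1 / x2) ≤ φ x2 * x2 / β * (1 / x2) := by
            rw [← hρe _ h.le]
            gcongr
            exact hρm (hθle x1 hx1 x2 h0)
        _ = φ x2 / β := by field_simp
        _ ≤ 1 / β := by gcongr; exact hφ1 _
  · intro x1 hx1 x2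
    simp only
    split_ifs with h
    · exact hB
    · push Not at h
      have h0 : 0 < x2 := by linarith
      have := hρB x2 h.le _ (hθle x1 hx1 x2 h0)
      convert this using 1
      field_simp
  · intro x1 hx1 x2 hx2
    simp only [H]
    split_ifs with h
    · rw [hPl _ h, add_zero]
      have : 0 < κ2 - κ1 := by linarith
      positivity
    · push Not at h
      have h0 : 0 < x2 := by linarith
      have := hqm (hθle x1 hx1 x2 h0)
      linarith [hPq x2 h.le hx2]


/-- Theorem `ergodic`.  Fix `β > 0`.  For every `α > 0` and
`β < κ₁ < κ₂` there is a function `V : Ω → [1,∞)` of class `C²(Ω)` (one-sided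
derivatives at the boundary), with first-order partial derivatives `V1, V2` and
second-order derivative `V11` in `x₁`, satisfying the oblique derivative condition
`V1(0,x₂) = V2(0,x₂)`, blowing up at infinity, and such that the diffusion generator
satisfies `G_Y V(x) ≤ -α c V(x) + α d` on `Ω` with the explicit constants `c, d`. -/
theorem stmt17 (β : ℝ) (hβ : 0 < β) (α κ1 κ2 : ℝ) (hα : 0 < α)
    (hκ1 : β < κ1) (hκ12 : κ1 < κ2) :
    ∀ c d : ℝ,
      c = 1 - 12 / (κ2 - κ1) ^ 2 * Real.log ((κ2 - β) / (κ1 - β)) -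
            1 / (β * (κ1 - β)) *
              (1 + κ1 / (κ1 - β) * (4 * (κ1 - β) / (κ2 - κ1))) -
            α * (4 / (κ2 - κ1) * Real.log ((κ2 - β) / (κ1 - β)) + 1 / β) ^ 2 →
      d = ((κ2 - β) / (κ1 - β) * (κ2 / κ1)) ^ α *
            Real.exp (α * (κ2 - κ1) / β) →
      ∃ V V1 V2 V11 : ℝ → ℝ → ℝ,
        -- V : Ω → [1, ∞)
        (∀ x1 ≤ (0 : ℝ), ∀ x2 : ℝ, 0 ≤ x2 → 1 ≤ V x1 x2) ∧
        -- V ∈ C²(Ω)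
        ContDiffOn ℝ 2 (fun p : ℝ × ℝ => V p.1 p.2)
          (Set.Iic (0 : ℝ) ×ˢ Set.Ici (0 : ℝ)) ∧
        -- V1, V2, V11 are the (one-sided) partial derivatives of V on Ω
        (∀ x1 ≤ (0 : ℝ), ∀ x2 : ℝ, 0 ≤ x2 →
          HasDerivWithinAt (fun t => V t x2) (V1 x1 x2) (Set.Iic 0) x1 ∧
          HasDerivWithinAt (fun t => V x1 t) (V2 x1 x2) (Set.Ici 0) x2 ∧
          HasDerivWithinAt (fun t => V1 t x2) (V11 x1 x2) (Set.Iic 0) x1) ∧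
        -- oblique boundary condition
        (∀ x2 : ℝ, 0 ≤ x2 → V1 0 x2 = V2 0 x2) ∧
        -- V(x) → ∞ as |x| → ∞ within Ω
        (∀ M : ℝ, ∃ R : ℝ, ∀ x1 ≤ (0 : ℝ), ∀ x2 : ℝ, 0 ≤ x2 →
          R ≤ ‖(x1, x2)‖ → M ≤ V x1 x2) ∧
        -- Foster-Lyapunov drift condition for the diffusion generator G_Y
        (∀ x1 ≤ (0 : ℝ), ∀ x2 : ℝ, 0 ≤ x2 →
          (-x1 + x2 - β) * V1 x1 x2 - x2 * V2 x1 x2 + V11 x1 x2 ≤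
            -(α * c) * V x1 x2 + α * d) := by
  intro c d hc hd
  have hκ0 : 0 < κ1 := by linarith
  have hkb : 0 < κ1 - β := by linarith
  have hkb2 : 0 < κ2 - β := by linarith
  have hδ : 0 < κ2 - κ1 := by linarith
  obtain ⟨φ, ψ, g, P, q, ρ, ρ', ⟨hψc, hφ, hφl, hφr, hφ0, hφ1, hψ4⟩, ⟨hg, hg0, hgu, hgl⟩,
    ⟨hP, hP0, hPl, hPu⟩, ⟨hq, hρ, hρc, hqm, hρm, hq0, hρ0, hql, hρe, hPq, hρB⟩⟩ :=
    aux_pieces β κ1 κ2 hβ hκ1 hκ12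
  have hBpos : 0 ≤ 1 / (β * (κ1 - β)) *
      (1 + κ1 / (κ1 - β) * (4 * (κ1 - β) / (κ2 - κ1))) := by positivity
  obtain ⟨H, H1, H2, H11, hH0, hHC, hH1, hH11, hH2, hHb, hHL, hH1p, hH1u, hH11u, hHu⟩ :=
    aux_H β κ1 κ2 _ hβ hκ1 hκ12 hBpos φ P q ρ ρ' hφl hφ1 hPl hq hρ hρc hqm hρm hq0 hρ0
      hql hρe hPq hρB
  generalize hBdef : 1 / (β * (κ1 - β)) *
      (1 + κ1 / (κ1 - β) * (4 * (κ1 - β) / (κ2 - κ1))) = B at *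
  have hlpos : (1 : ℝ) - ((κ2 - β) / (κ1 - β))⁻¹ ≤ Real.log ((κ2 - β) / (κ1 - β)) :=
    Real.one_sub_inv_le_log_of_pos (by positivity)
  have hK1 : 1 ≤ (κ2 - β) / (κ1 - β) := by rw [one_le_div hkb]; linarith
  have hℓ0 : 0 ≤ Real.log ((κ2 - β) / (κ1 - β)) := Real.log_nonneg hK1
  have hsℓ : 1 / (κ2 - β) ≤ Real.log ((κ2 - β) / (κ1 - β)) / (κ2 - κ1) := by
    rw [le_div_iff₀ hδ]
    refine le_trans (le_of_eq ?_) hlpos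
    field_simp
    ring
  have hdpos : d = Real.exp (α * (Real.log ((κ2 - β) / (κ1 - β)) + Real.log (κ2 / κ1)
      + (κ2 - κ1) / β)) := by
    have hK2 : 0 < κ2 / κ1 := div_pos (by linarith) hκ0
    rw [hd, Real.rpow_def_of_pos (by positivity), Real.log_mul (by positivity) hK2.ne',
      ← Real.exp_add]
    congr 1
    ring
  have hlog2 : 0 ≤ Real.log (κ2 / κ1) := Real.log_nonneg (by rw [one_le_div hκ0]; linarith)
  generalize hℓ : Real.log ((κ2 - β) / (κ1 - β)) = ℓ at *
  obtain ⟨s, hs⟩ : ∃ s, s = 1 / (κ2 - β) := ⟨_, rfl⟩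
  rw [← hs] at hsℓ
  have hs0 : 0 < s := by rw [hs]; positivity
  have hsδ : s * (κ2 - κ1) ≤ ℓ := (le_div_iff₀ hδ).1 hsℓ
  have hφc1 : ContDiff ℝ 1 φ := aux_C1 hφ hψc
  have hg2 : ContDiff ℝ 2 g := aux_C2 hg hφc1
  have hφP : ContDiff ℝ 1 (fun x => φ x / x) := by
    rw [contDiff_iff_contDiffAt]
    intro x
    rcases lt_or_ge x κ1 with h | h
    · refine (contDiffAt_const (c := (0 : ℝ))).congr_of_eventuallyEq ?_
      filter_upwards [gt_mem_nhds h] with t ht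
      rw [hφl t ht.le, zero_div]
    · exact hφc1.contDiffAt.div contDiffAt_id (by linarith)
  have hP2 : ContDiff ℝ 2 P := aux_C2 hP hφP
  let f : ℝ → ℝ → ℝ := fun x1 x2 => s * g (-x1) + P x2 + H x1 x2
  let f1 : ℝ → ℝ → ℝ := fun x1 x2 => -(s * φ (-x1)) + H1 x1 x2
  let f2 : ℝ → ℝ → ℝ := fun x1 x2 => φ x2 / x2 + H2 x1 x2
  let f11 : ℝ → ℝ → ℝ := fun x1 x2 => s * ψ (-x1) + H11 x1 x2
  have hf0 : ∀ x1 x2, 0 ≤ f x1 x2 := fun x1 x2 =>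
    add_nonneg (add_nonneg (mul_nonneg hs0.le (hg0 _)) (hP0 _)) (hH0 _ _)
  have hf1 : ∀ x1 x2, HasDerivAt (fun t => f t x2) (f1 x1 x2) x1 := by
    intro x1 x2
    refine (((((hg (-x1)).comp x1 (hasDerivAt_neg x1)).const_mul s).add_const (P x2)).add
      (hH1 x1 x2)).congr_deriv ?_
    simp only [f1]
    ring
  have hf2 : ∀ x1 ≤ (0 : ℝ), ∀ x2, HasDerivAt (fun t => f x1 t) (f2 x1 x2) x2 := by
    intro x1 hx1 x2
    exact ((hP x2).const_add _).add (hH2 x1 hx1 x2)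
  have hf11 : ∀ x1 x2, HasDerivAt (fun t => f1 t x2) (f11 x1 x2) x1 := by
    intro x1 x2
    refine (((((hφ (-x1)).comp x1 (hasDerivAt_neg x1)).const_mul s).neg).add
      (hH11 x1 x2)).congr_deriv ?_
    simp only [f11]
    ring
  refine ⟨fun x1 x2 => Real.exp (α * f x1 x2),
    fun x1 x2 => Real.exp (α * f x1 x2) * (α * f1 x1 x2),
    fun x1 x2 => Real.exp (α * f x1 x2) * (α * f2 x1 x2),
    fun x1 x2 => Real.exp (α * f x1 x2) * (α * f1 x1 x2) * (α * f1 x1 x2) +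
      Real.exp (α * f x1 x2) * (α * f11 x1 x2), ?_, ?_, ?_, ?_, ?_, ?_⟩
  · intro x1 _ x2 _
    exact Real.one_le_exp (mul_nonneg hα.le (hf0 _ _))
  · apply ContDiffOn.exp
    apply contDiffOn_const.mul
    refine ContDiffOn.add (ContDiffOn.add ?_ ?_) hHC
    · apply ContDiff.contDiffOn
      exact contDiff_const.mul (hg2.comp contDiff_fst.neg)
    · exact (hP2.comp contDiff_snd).contDiffOn
  · intro x1 hx1 x2 _
    have hV1 : HasDerivAt (fun t => Real.exp (α * f t x2))
      (Real.exp (α * f x1 x2) * (α * f1 x1 x2)) x1 := ((hf1 x1 x2).const_mul α).exp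
    refine ⟨hV1.hasDerivWithinAt, ((hf2 x1 hx1 x2).const_mul α).exp.hasDerivWithinAt, ?_⟩
    exact (hV1.mul ((hf11 x1 x2).const_mul α)).hasDerivWithinAt
  · intro x2 _
    simp only [f1, f2]
    rw [hHb x2, neg_zero, hφl 0 hκ0.le]
    ring
  · intro M
    refine ⟨max (κ2 + |M| / (α * s)) (κ2 * Real.exp (|M| / α)), ?_⟩
    intro x1 hx1 x2 hx2 hR
    have hκ20 : 0 < κ2 := by linarith
    have hMα : 0 ≤ |M| / α := by positivity
    have key : |M| ≤ α * f x1 x2 := by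
      rw [Prod.norm_def, le_max_iff] at hR
      simp only [Real.norm_eq_abs, abs_of_nonneg hx2, abs_of_nonpos hx1] at hR
      rcases hR with h | h
      · have h1 := (le_max_left _ _).trans h
        have h2 : 0 ≤ |M| / (α * s) := by positivity
        have h3 := hgl (-x1) (by linarith)
        have h4 : s * (|M| / (α * s)) ≤ f x1 x2 := by
          have : s * (|M| / (α * s)) ≤ s * g (-x1) := by gcongr; linarith
          simp only [f]
          linarith [hP0 x2, hH0 x1 x2]
        calc |M| = α * (s * (|M| / (α * s))) := by field_simp
          _ ≤ _ := by gcongr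
      · have h1 := (le_max_right _ _).trans h
        have h2 : κ2 ≤ x2 := by nlinarith [Real.one_le_exp hMα]
        have h3 := hPu x2 h2
        have h4 : Real.log κ2 + |M| / α ≤ Real.log x2 := by
          rw [← Real.log_exp (|M| / α), ← Real.log_mul hκ20.ne' (Real.exp_pos _).ne']
          exact Real.log_le_log (by positivity) h1
        have h5 : |M| / α ≤ f x1 x2 := by
          simp only [f]
          linarith [hH0 x1 x2, mul_nonneg hs0.le (hg0 (-x1))]
        calc |M| = α * (|M| / α) := by field_simp
          _ ≤ _ := by gcongr
    have := Real.add_one_le_exp (α * f x1 x2)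
    linarith [le_abs_self M]
  · intro x1 hx1 x2 hx2
    have hE : 0 < Real.exp (α * f x1 x2) := Real.exp_pos _
    -- drift of f
    have hL : (-x1 + x2 - β) * f1 x1 x2 - x2 * f2 x1 x2 ≤
        -(s * (-x1 - β) * φ (-x1)) - φ x2 := by
      have e0 : x2 * (φ x2 / x2) = φ x2 := by
        rcases eq_or_ne x2 0 with h | h
        · rw [h, hφl 0 hκ0.le]; simp
        · field_simp
      have e1 : (-x1 + x2 - β) * f1 x1 x2 - x2 * f2 x1 x2 =
          -(s * (-x1 - β) * φ (-x1)) - x2 * (s * φ (-x1)) - x2 * (φ x2 / x2) +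
          ((-x1 + x2 - β) * H1 x1 x2 - x2 * H2 x1 x2) := by
        simp only [f1, f2]; ring
      rw [e1, hHL, e0]
      have := mul_nonneg hx2 (mul_nonneg hs0.le (hφ0 (-x1)))
      linarith
    have hL1 : 0 ≤ s * (-x1 - β) * φ (-x1) := by
      rcases le_total (-x1) κ1 with h | h
      · rw [hφl _ h, mul_zero]
      · exact mul_nonneg (mul_nonneg hs0.le (by linarith)) (hφ0 _)
    -- second-order terms
    have h11 : f11 x1 x2 ≤ 12 / (κ2 - κ1) ^ 2 * ℓ + B := by
      have : s * ψ (-x1) ≤ 12 / (κ2 - κ1) ^ 2 * ℓ := by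
        calc s * ψ (-x1) ≤ s * (4 / (κ2 - κ1)) := by gcongr; exact hψ4 _
          _ ≤ ℓ / (κ2 - κ1) * (4 / (κ2 - κ1)) := by gcongr
          _ = 4 / (κ2 - κ1) ^ 2 * ℓ := by field_simp
          _ ≤ _ := by gcongr; norm_num
      simp only [f11]
      linarith [hH11u x1 hx1 x2]
    have h1sq : (f1 x1 x2) ^ 2 ≤ (4 / (κ2 - κ1) * ℓ + 1 / β) ^ 2 := by
      have a1 : 0 ≤ 1 / β := by positivity
      have a2 : s * φ (-x1) ≤ ℓ / (κ2 - κ1) := by nlinarith [hφ1 (-x1), hφ0 (-x1)]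
      have a3 : 4 / (κ2 - κ1) * ℓ = 4 * (ℓ / (κ2 - κ1)) := by ring
      have a4 : 0 ≤ ℓ / (κ2 - κ1) := by positivity
      have a5 := mul_nonneg hs0.le (hφ0 (-x1))
      apply sq_le_sq'
      · simp only [f1]; linarith [hH1p x1 x2]
      · simp only [f1]; linarith [hH1u x1 hx1 x2]
    have hsum : f11 x1 x2 + α * (f1 x1 x2) ^ 2 ≤ 1 - c := by
      have := mul_le_mul_of_nonneg_left h1sq hα.le
      rw [hc]
      linarith
    have hmain : Real.exp (α * f x1 x2) *
        (1 + ((-x1 + x2 - β) * f1 x1 x2 - x2 * f2 x1 x2)) ≤ d := by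
      have hd0 : 0 ≤ d := by rw [hdpos]; exact (Real.exp_pos _).le
      by_cases hy : κ2 ≤ -x1
      · have : 1 ≤ s * (-x1 - β) * φ (-x1) := by
          rw [hφr _ hy, mul_one, hs, one_div, ← div_eq_inv_mul, one_le_div hkb2]
          linarith
        have : 1 + ((-x1 + x2 - β) * f1 x1 x2 - x2 * f2 x1 x2) ≤ 0 := by
          linarith [hφ0 x2]
        exact (mul_nonpos_of_nonneg_of_nonpos hE.le this).trans hd0
      by_cases hz : κ2 ≤ x2
      · have : 1 + ((-x1 + x2 - β) * f1 x1 x2 - x2 * f2 x1 x2) ≤ 0 := by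
          linarith [hφr _ hz]
        exact (mul_nonpos_of_nonneg_of_nonpos hE.le this).trans hd0
      push Not at hy hz
      have hle : Real.exp (α * f x1 x2) ≤ d := by
        rw [hdpos, Real.exp_le_exp]
        apply mul_le_mul_of_nonneg_left _ hα.le
        have b1 := mul_le_mul_of_nonneg_left (hgu (-x1) hy.le) hs0.le
        have b2 := hHu x1 hx1 x2 hz.le
        simp only [f]
        linarith
      calc _ ≤ Real.exp (α * f x1 x2) * 1 := by
            apply mul_le_mul_of_nonneg_left _ hE.le
            linarith [hφ0 x2]
        _ ≤ d := by rw [mul_one]; exact hle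
    have hfin := mul_le_mul_of_nonneg_left hsum hE.le
    have := mul_le_mul_of_nonneg_left (add_le_add hmain hfin) hα.le
    simp only
    linarith
end
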